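/- arXiv:1603.07922 — 2 statements merged into one kernel-verified Lean document; each statement's English description precedes it below -/
import Mathlib

section
/- Let S be a finite set of prime numbers and let a be a positive integer. There are only finitely many triples (x, y, w) of S-units with gcd(x, y) ≤ a for which there exists a nonzero integer z such that x + y = w·z². -/
/-- An `S`-unit: a nonzero integer all of whose prime divisors belong to `S`. -/
def IsSUnit (S : Finset ℕ) (x : ℤ) : Prop :=
  x ≠ 0 ∧ ∀ p : ℕ, p.Prime → (p : ℤ) ∣ x → p ∈ S

/-!
For `S`-units with `x + y = w * z ^ 2`, the ratio `u = x / y` satisfies `1 + u = w' * z ^ 2` with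
`u` and `w'` in a finitely generated group. Over a number field containing the square roots of its
generators, `1 + u` is a square `s ^ 2`, and `1 + s` and `1 - s`, whose product is `-u`, are
`S`-units with sum `2`. This reduces the claim to the finiteness of the solutions of `u + v = 1` in
a finitely generated group.

For the latter, adjoin cube roots: `u = t ^ 3` and `1 - t ^ 3` is an `S`-unit. By the product
formula, the normalised distances of `t` to the nearest cube roots of unity at the places of `S`
multiply to at most a constant times `H(t) ^ (-3)`, where `H` is the height. Thue's method
excludes two such `t` of very different large heights that approximate the same roots of unity to
the same exponents. The auxiliary polynomials are explicit: if `Q / P` is the Padé approximant of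
the `r`-th root near `1`, then `x * P (x ^ r) - y * Q (x ^ r)` is an `S`-integer which is too small
at the places of `S` to be nonzero.
-/

open Finset Polynomial

/-! ### Padé approximants of the `r`-th root -/

theorem dvd_prod_arith_of_coprime {m d l : ℕ} (hm : m ∣ l.factorial) (hd : d.Coprime m) (c : ℕ) :
    m ∣ ∏ i ∈ range l, (c + d * i) := by
  have : NeZero m := ⟨ne_zero_of_dvd_ne_zero l.factorial_ne_zero hm⟩
  -- `t = c / d` modulo `m`
  set t : ℕ := ((d : ZMod m)⁻¹ * c).val
  have ht : (d * t : ZMod m) = c := by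
    rw [ZMod.natCast_zmod_val, ← mul_assoc, ZMod.coe_mul_inv_eq_one d hd, one_mul]
  rw [← ZMod.natCast_eq_zero_iff]
  calc ((∏ i ∈ range l, (c + d * i) : ℕ) : ZMod m)
      = (d ^ l * t.ascFactorial l : ℕ) := by
        rw [Nat.ascFactorial_eq_prod_range, ← card_range l, ← prod_const, card_range,
          ← prod_mul_distrib]
        push_cast
        exact prod_congr rfl fun i _ ↦ by rw [mul_add, ht]
    _ = 0 := (ZMod.natCast_eq_zero_iff _ _).2
        ((hm.trans (Nat.factorial_dvd_ascFactorial t l)).mul_left _)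

theorem factorial_dvd_pow_mul_prod_arith (c d l : ℕ) :
    l.factorial ∣ d ^ l * ∏ i ∈ range l, (c + d * i) := by
  refine (Nat.dvd_iff_prime_pow_dvd_dvd _ _).2 fun q e hq hqe ↦ ?_
  by_cases hqd : q ∣ d
  · have hel : e ≤ l := by
      have := Fact.mk hq
      have hval := (padicValNat_dvd_iff_le l.factorial_ne_zero).1 hqe
      have hlegendre := sub_one_mul_padicValNat_factorial (p := q) l
      have := Nat.le_mul_of_pos_left (padicValNat q l.factorial) (Nat.sub_pos_of_lt hq.one_lt)
      omega
    exact ((pow_dvd_pow_of_dvd hqd e).trans (pow_dvd_pow d hel)).mul_right _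
  · exact (dvd_prod_arith_of_coprime hqe
      (((hq.coprime_iff_not_dvd).2 hqd).symm.pow_right e) c).mul_left _

/-- The integer `d ^ (2 * l) * multichoose (c / d) l`, that is, the coefficient of `x ^ l` in
`(1 - d ^ 2 * x) ^ (-c / d)`. -/
def scaledMultichoose (d c l : ℕ) : ℕ :=
  d ^ l * (∏ i ∈ range l, (c + d * i)) / l.factorial

theorem scaledMultichoose_mul_factorial (d c l : ℕ) :
    scaledMultichoose d c l * l.factorial = d ^ l * ∏ i ∈ range l, (c + d * i) :=
  Nat.div_mul_cancel (factorial_dvd_pow_mul_prod_arith c d l)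

theorem ascFactorial_le_factorial_mul_two_pow (m l : ℕ) :
    m.ascFactorial l ≤ l.factorial * 2 ^ (m + l) := by
  rw [Nat.ascFactorial_eq_factorial_mul_choose']
  gcongr
  exact (Nat.choose_le_two_pow _ _).trans (Nat.pow_le_pow_right two_pos (Nat.sub_le _ _))

theorem scaledMultichoose_le {d c m : ℕ} (h : c ≤ d * m) (l : ℕ) :
    scaledMultichoose d c l ≤ (d ^ 2) ^ l * 2 ^ (m + l) := by
  refine Nat.div_le_of_le_mul ?_
  calc d ^ l * ∏ i ∈ range l, (c + d * i)
      ≤ d ^ l * ∏ i ∈ range l, d * (m + i) := by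
        gcongr with i; rw [mul_add]; gcongr
    _ = (d ^ 2) ^ l * m.ascFactorial l := by
        rw [prod_mul_distrib, prod_const, card_range, Nat.ascFactorial_eq_prod_range]; ring
    _ ≤ (d ^ 2) ^ l * (l.factorial * 2 ^ (m + l)) := by
        gcongr; exact ascFactorial_le_factorial_mul_two_pow m l
    _ = l.factorial * ((d ^ 2) ^ l * 2 ^ (m + l)) := by ring

/-- The integer `r ^ (2 * n) * choose (n - 1 / r) k * choose (n + 1 / r) (n - k)`, the `k`-th
coefficient of the Padé denominator `padeP r n`; it is meant for `k ≤ n`. -/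
def padeCoeff (r n k : ℕ) : ℕ :=
  scaledMultichoose r (r * (n - k) + (r - 1)) k * scaledMultichoose r (r * k + (r + 1)) (n - k)

theorem padeCoeff_le {r n k : ℕ} (hr : 0 < r) (hk : k ≤ n) :
    padeCoeff r n k ≤ 8 * (4 * r ^ 2) ^ n := by
  obtain ⟨m, rfl⟩ := Nat.exists_eq_add_of_le hk
  rw [padeCoeff, Nat.add_sub_cancel_left]
  calc _ ≤ ((r ^ 2) ^ k * 2 ^ (m + 1 + k)) * ((r ^ 2) ^ m * 2 ^ (k + 2 + m)) :=
        Nat.mul_le_mul (scaledMultichoose_le (by grind) k)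
          (scaledMultichoose_le (by grind) m)
    _ = 8 * (4 * r ^ 2) ^ (k + m) := by
        have hfour : 4 ^ (k + m) = (2 ^ (k + m)) ^ 2 := by
          rw [← pow_mul, mul_comm, pow_mul]; norm_num
        rw [mul_pow, hfour]; ring

/-- The product `(r - 1) * (2 * r - 1) * ⋯ * (l * r - 1)`. -/
def prodMulSubOne (r : ℚ) (l : ℕ) : ℚ := ∏ i ∈ range l, (r * (i + 1) - 1)

/-- The product `(r + 1) * (2 * r + 1) * ⋯ * (l * r + 1)`. -/
def prodMulAddOne (r : ℚ) (l : ℕ) : ℚ := ∏ i ∈ range l, (r * (i + 1) + 1)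

theorem prodMulSubOne_pos {r : ℚ} (hr : 1 < r) (l : ℕ) : 0 < prodMulSubOne r l :=
  prod_pos fun i _ ↦ by nlinarith [(Nat.cast_nonneg i : (0 : ℚ) ≤ i)]

theorem prodMulAddOne_pos {r : ℚ} (hr : 0 ≤ r) (l : ℕ) : 0 < prodMulAddOne r l :=
  prod_pos fun i _ ↦ by positivity

theorem padeCoeff_mul_eq {r : ℕ} (hr : 0 < r) (k m : ℕ) :
    (padeCoeff r (k + m) k : ℚ) *
        (k.factorial * m.factorial * (prodMulAddOne r k * prodMulSubOne r m)) =
      r ^ (k + m) * (prodMulSubOne r (k + m) * prodMulAddOne r (k + m)) := by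
  have hsub : prodMulSubOne r (k + m) = prodMulSubOne r m *
      ((∏ i ∈ range k, ((r * m + (r - 1)) + r * i) : ℕ) : ℚ) := by
    rw [prodMulSubOne, prodMulSubOne, add_comm k m, prod_range_add]
    push_cast [Nat.cast_pred hr]
    congr! 2; ring
  have hadd : prodMulAddOne r (k + m) = prodMulAddOne r k *
      ((∏ i ∈ range m, ((r * k + (r + 1)) + r * i) : ℕ) : ℚ) := by
    rw [prodMulAddOne, prodMulAddOne, prod_range_add]
    push_cast
    congr! 2; ring
  have hk := congrArg (Nat.cast (R := ℚ)) (scaledMultichoose_mul_factorial r (r * m + (r - 1)) k)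
  have hm := congrArg (Nat.cast (R := ℚ)) (scaledMultichoose_mul_factorial r (r * k + (r + 1)) m)
  rw [Nat.cast_mul, Nat.cast_mul] at hk hm
  rw [hsub, hadd, padeCoeff, Nat.add_sub_cancel_left, Nat.cast_mul, pow_add]
  rw [Nat.cast_pow] at hk hm
  linear_combination (prodMulAddOne r k * prodMulSubOne r m) *
    ((scaledMultichoose r (r * k + (r + 1)) m * m.factorial : ℚ) * hk +
     (r ^ k * (∏ i ∈ range k, ((r * m + (r - 1)) + r * i) : ℕ) : ℚ) * hm)

theorem prod_range_apply_sub {M : Type*} [CommMonoid M] (f : ℤ → M) (k m : ℕ) :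
    ∏ x ∈ range (k + m + 1), f (k - x) =
      (∏ i ∈ range k, f (i + 1)) * f 0 * ∏ i ∈ range m, f (-(i + 1)) := by
  rw [show k + m + 1 = k + 1 + m by ring, prod_range_add, prod_range_succ, sub_self,
    ← prod_range_reflect (fun i : ℕ ↦ f (i + 1))]
  congr 1
  · congr 1
    refine prod_congr rfl fun i hi ↦ congrArg f ?_
    have := mem_range.1 hi
    omega
  · exact prod_congr rfl fun i _ ↦ congrArg f (by push_cast; ring)

theorem prod_range_erase_apply_sub {M : Type*} [CommMonoid M] (f : ℤ → M) (k m : ℕ) :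
    ∏ x ∈ (range (k + m + 1)).erase k, f (k - x) =
      (∏ i ∈ range k, f (i + 1)) * ∏ i ∈ range m, f (-(i + 1)) := by
  have h := prod_range_apply_sub (Function.update f 0 1) k m
  have hne (i : ℕ) : (i + 1 : ℤ) ≠ 0 := by omega
  simp only [Function.update_self, mul_one, Function.update_of_ne (hne _),
    Function.update_of_ne (neg_ne_zero.2 (hne _))] at h
  rw [← h, ← mul_prod_erase (range (k + m + 1)) _ (mem_range.2 (by omega : k < k + m + 1)),
    sub_self, Function.update_self, one_mul]
  refine prod_congr rfl fun x hx ↦ (Function.update_of_ne ?_ _ _).symm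
  have := ne_of_mem_erase hx
  omega

theorem prod_erase_mul_sub (r : ℚ) (k m : ℕ) :
    ∏ x ∈ (range (k + m + 1)).erase k, r * ((k : ℚ) - x) =
      (-1) ^ m * (r ^ (k + m) * (k.factorial * m.factorial)) := by
  have h := prod_range_erase_apply_sub (fun t : ℤ ↦ r * (t : ℚ)) k m
  push_cast at h
  rw [h, prod_mul_distrib, prod_mul_distrib, prod_neg, prod_const, prod_const, card_range,
    card_range, ← prod_range_add_one_eq_factorial, ← prod_range_add_one_eq_factorial]
  push_cast
  ring

theorem prod_mul_sub_sub_one (r : ℚ) (k m : ℕ) :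
    ∏ x ∈ range (k + m + 1), (r * ((k : ℚ) - x) - 1) =
      -((-1) ^ m * (prodMulSubOne r k * prodMulAddOne r m)) := by
  have h := prod_range_apply_sub (fun t : ℤ ↦ r * (t : ℚ) - 1) k m
  have hneg (i : ℕ) : r * -(i + 1 : ℚ) - 1 = -(r * (i + 1) + 1) := by ring
  push_cast at h
  simp only [hneg, prod_neg, card_range] at h
  rw [h, prodMulSubOne, prodMulAddOne]
  ring

theorem prod_mul_sub_add_one (r : ℚ) (k m : ℕ) :
    ∏ x ∈ range (k + m + 1), (r * ((k : ℚ) - x) + 1) =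
      (-1) ^ m * (prodMulAddOne r k * prodMulSubOne r m) := by
  have h := prod_range_apply_sub (fun t : ℤ ↦ r * (t : ℚ) + 1) k m
  have hneg (i : ℕ) : r * -(i + 1 : ℚ) + 1 = -(r * (i + 1) - 1) := by ring
  push_cast at h
  simp only [hneg, prod_neg, card_range] at h
  rw [h, prodMulSubOne, prodMulAddOne]
  ring

theorem sum_eval_div_prod_erase_sub_eq_zero {F ι : Type*} [Field F] [DecidableEq ι] {s : Finset ι}
    {v : ι → F} (hv : Set.InjOn v s) {p : F[X]} (hp : p.natDegree + 1 < #s) :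
    ∑ i ∈ s, p.eval (v i) / ∏ j ∈ s.erase i, (v i - v j) = 0 := by
  have hdeg : p.degree < #s :=
    degree_le_natDegree.trans_lt (Nat.cast_lt.2 (Nat.lt_of_succ_lt hp))
  rw [← Lagrange.coeff_eq_sum hv hdeg, coeff_eq_zero_of_natDegree_lt (by omega)]

theorem padeCoeff_mul_prod_erase_left {r n k : ℕ} (hr : 0 < r) (hk : k ≤ n) :
    (padeCoeff r n (n - k) : ℚ) * ((∏ x ∈ (range (n + 1)).erase k, r * ((k : ℚ) - x)) *
        ∏ x ∈ range (n + 1), (r * ((k : ℚ) - x) - 1)) =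
      -((r ^ 2) ^ n * (prodMulSubOne r n * prodMulAddOne r n)) := by
  obtain ⟨m, rfl⟩ := Nat.exists_eq_add_of_le hk
  have h := padeCoeff_mul_eq hr m k
  have hsq : ((-1 : ℚ) ^ m) ^ 2 = 1 := by rw [← pow_mul, mul_comm, pow_mul]; norm_num
  rw [add_comm m k] at h
  rw [Nat.add_sub_cancel_left, prod_erase_mul_sub, prod_mul_sub_sub_one]
  linear_combination -(r ^ (k + m) : ℚ) * h - (padeCoeff r (k + m) m : ℚ) * (r ^ (k + m) *
    (k.factorial * m.factorial) * prodMulSubOne r k * prodMulAddOne r m) * hsq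

theorem padeCoeff_mul_prod_erase_right {r n k : ℕ} (hr : 0 < r) (hk : k ≤ n) :
    (padeCoeff r n k : ℚ) * ((∏ x ∈ range (n + 1), (r * ((k : ℚ) - x) + 1)) *
        ∏ x ∈ (range (n + 1)).erase k, r * ((k : ℚ) - x)) =
      (r ^ 2) ^ n * (prodMulSubOne r n * prodMulAddOne r n) := by
  obtain ⟨m, rfl⟩ := Nat.exists_eq_add_of_le hk
  have h := padeCoeff_mul_eq hr k m
  have hsq : ((-1 : ℚ) ^ m) ^ 2 = 1 := by rw [← pow_mul, mul_comm, pow_mul]; norm_num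
  rw [prod_erase_mul_sub, prod_mul_sub_add_one]
  linear_combination (r ^ (k + m) : ℚ) * h + (padeCoeff r (k + m) k : ℚ) * (r ^ (k + m) *
    (k.factorial * m.factorial) * prodMulAddOne r k * prodMulSubOne r m) * hsq

/-- The interpolation nodes `0, r, …, r * n` (left summand) and `1, r + 1, …, r * n + 1`
(right summand): the exponents occurring in `Q (x ^ r)` and in `x * P (x ^ r)`, where `P` and `Q`
have degree `n`. -/
def padeNode (r : ℚ) : ℕ ⊕ ℕ → ℚ := Sum.elim (fun k ↦ r * k) (fun k ↦ r * k + 1)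

theorem padeNode_injective {r : ℕ} (hr : 2 ≤ r) : Function.Injective (padeNode r) := by
  have hr₀ : (r : ℚ) ≠ 0 := by positivity
  have hne (a b : ℕ) : (r * a : ℚ) ≠ r * b + 1 := fun h ↦ by
    have hdvd : r ∣ r * b + 1 := ⟨a, by exact_mod_cast h.symm⟩
    exact absurd (Nat.le_of_dvd one_pos ((Nat.dvd_add_right (dvd_mul_right r b)).1 hdvd)) (by omega)
  rintro (a | a) (b | b) h <;> simp only [padeNode, Sum.elim_inl, Sum.elim_inr] at h
  · exact congrArg _ (by exact_mod_cast mul_left_cancel₀ hr₀ h)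
  · exact (hne a b h).elim
  · exact (hne b a h.symm).elim
  · exact congrArg _ (by exact_mod_cast mul_left_cancel₀ hr₀ (add_right_cancel h))

-- Up to a common factor, the coefficients are the nodal weights of the nodes `padeNode`.
theorem sum_padeCoeff_mul_eval_eq_zero {r n : ℕ} (hr : 2 ≤ r) {p : ℚ[X]}
    (hp : p.natDegree ≤ 2 * n) :
    ∑ k ∈ range (n + 1), ((padeCoeff r n k : ℚ) * p.eval (r * k + 1 : ℚ) -
      (padeCoeff r n (n - k) : ℚ) * p.eval (r * k : ℚ)) = 0 := by
  set s : Finset (ℕ ⊕ ℕ) := (range (n + 1)).disjSum (range (n + 1))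
  set c : ℚ := (r ^ 2) ^ n * (prodMulSubOne r n * prodMulAddOne r n)
  have hr₀ : 0 < r := by omega
  have hr₁ : (1 : ℚ) < r := by exact_mod_cast hr
  have hc : c ≠ 0 := by
    have := prodMulSubOne_pos hr₁ n
    have := prodMulAddOne_pos r.cast_nonneg n
    positivity
  have hleft (k : ℕ) (hk : k ≤ n) : (padeCoeff r n (n - k) : ℚ) =
      -(c / ∏ j ∈ s.erase (.inl k), (padeNode r (.inl k) - padeNode r j)) := by
    have herase : s.erase (.inl k) = ((range (n + 1)).erase k).disjSum (range (n + 1)) := by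
      ext (a | a) <;> simp [s]
    have h := padeCoeff_mul_prod_erase_left hr₀ hk
    simp only [herase, prod_disjSum, padeNode, Sum.elim_inl, Sum.elim_inr, ← mul_sub,
      ← sub_sub]
    rw [← neg_div, eq_div_iff (right_ne_zero_of_mul (h.trans_ne (neg_ne_zero.2 hc))), h]
  have hright (k : ℕ) (hk : k ≤ n) : (padeCoeff r n k : ℚ) =
      c / ∏ j ∈ s.erase (.inr k), (padeNode r (.inr k) - padeNode r j) := by
    have herase : s.erase (.inr k) = (range (n + 1)).disjSum ((range (n + 1)).erase k) := by
      ext (a | a) <;> simp [s]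
    have h := padeCoeff_mul_prod_erase_right hr₀ hk
    simp only [herase, prod_disjSum, padeNode, Sum.elim_inl, Sum.elim_inr,
      add_sub_add_right_eq_sub]
    simp only [add_sub_right_comm, ← mul_sub]
    rw [eq_div_iff (right_ne_zero_of_mul (h.trans_ne hc)), h]
  have hcard : p.natDegree + 1 < #s := by simp only [s, card_disjSum, card_range]; omega
  calc _ = c * ∑ i ∈ s, p.eval (padeNode r i) / ∏ j ∈ s.erase i, (padeNode r i - padeNode r j) := by
        rw [sum_disjSum, mul_add, mul_sum, mul_sum, ← sum_add_distrib]
        refine sum_congr rfl fun k hk ↦ ?_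
        rw [hleft k (Nat.lt_succ_iff.1 (mem_range.1 hk)),
          hright k (Nat.lt_succ_iff.1 (mem_range.1 hk))]
        simp only [padeNode, Sum.elim_inl, Sum.elim_inr]
        ring
    _ = 0 := by
        rw [sum_eval_div_prod_erase_sub_eq_zero (padeNode_injective hr).injOn hcard, mul_zero]

/-- The Padé denominator: `padeQ r n / padeP r n` approximates the `r`-th root near `1`, in the
sense that `padeError r n` vanishes there to order `2 * n + 1`. -/
noncomputable def padeP (r n : ℕ) : ℤ[X] := ∑ k ∈ range (n + 1), (padeCoeff r n k : ℤ) • X ^ k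

/-- The Padé numerator; see `padeP`. -/
noncomputable def padeQ (r n : ℕ) : ℤ[X] :=
  ∑ k ∈ range (n + 1), (padeCoeff r n (n - k) : ℤ) • X ^ k

/-- The polynomial `X * P (X ^ r) - Q (X ^ r)` for the Padé pair `(P, Q)` of degree `n`. -/
noncomputable def padeError (r n : ℕ) : ℤ[X] :=
  X * expand ℤ r (padeP r n) - expand ℤ r (padeQ r n)

theorem taylor_one_padeError_coeff (r n j : ℕ) :
    (taylor 1 (padeError r n)).coeff j = ∑ k ∈ range (n + 1),
      ((padeCoeff r n k : ℤ) * (r * k + 1).choose j -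
        (padeCoeff r n (n - k) : ℤ) * (r * k).choose j) := by
  have herror : padeError r n = ∑ k ∈ range (n + 1),
      ((padeCoeff r n k : ℤ) • X ^ (r * k + 1) - (padeCoeff r n (n - k) : ℤ) • X ^ (r * k)) := by
    simp only [padeError, padeP, padeQ, map_sum, map_smul, map_pow, expand_X, mul_sum,
      sum_sub_distrib, mul_smul_comm, ← pow_mul, ← pow_succ']
  simp only [herror, map_sum, map_sub, map_smul, taylor_apply, X_pow_comp, finsetSum_coeff,
    coeff_sub, coeff_smul, C_1, coeff_X_add_one_pow, smul_eq_mul]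

theorem X_pow_dvd_taylor_one_padeError {r : ℕ} (hr : 2 ≤ r) (n : ℕ) :
    X ^ (2 * n + 1) ∣ taylor 1 (padeError r n) := by
  refine X_pow_dvd_iff.2 fun j hj ↦ ?_
  have h := sum_padeCoeff_mul_eval_eq_zero (p := descPochhammer ℚ j) hr
    ((descPochhammer_natDegree ℚ j).trans_le (Nat.lt_succ_iff.1 hj))
  have heval (m : ℕ) : (descPochhammer ℚ j).eval (m : ℚ) = j.factorial * m.choose j := by
    rw [descPochhammer_eval_eq_descFactorial, Nat.descFactorial_eq_factorial_mul_choose,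
      Nat.cast_mul]
  rw [taylor_one_padeError_coeff, ← Int.cast_inj (α := ℚ)]
  refine mul_left_cancel₀ (Nat.cast_ne_zero.2 j.factorial_ne_zero) ?_
  rw [Int.cast_zero, mul_zero, ← h, Int.cast_sum, mul_sum]
  refine sum_congr rfl fun k _ ↦ ?_
  have h₁ := heval (r * k + 1)
  have h₀ := heval (r * k)
  push_cast at h₁ h₀ ⊢
  rw [h₁, h₀]
  ring

/-- Integer polynomials of degree at most `d` with coefficients bounded by `B`. -/
def IsSizeLE (d B : ℕ) (p : ℤ[X]) : Prop := p.natDegree ≤ d ∧ ∀ j, |p.coeff j| ≤ B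

theorem isSizeLE_sum_smul_X_pow {n B : ℕ} {a : ℕ → ℤ} (ha : ∀ k ≤ n, |a k| ≤ B) :
    IsSizeLE n B (∑ k ∈ range (n + 1), a k • X ^ k) := by
  constructor
  · refine natDegree_sum_le_of_forall_le _ _ fun k hk ↦ ?_
    exact (natDegree_smul_le _ _).trans
      ((natDegree_X_pow_le k).trans (Nat.lt_succ_iff.1 (mem_range.1 hk)))
  · intro j
    simp only [finsetSum_coeff, coeff_smul, coeff_X_pow, smul_eq_mul, mul_ite, mul_one, mul_zero,
      sum_ite_eq, mem_range]
    split_ifs with hj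
    · exact ha j (Nat.lt_succ_iff.1 hj)
    · simp

/-- The constant `C` of the bound `C ^ (n + 1)` on the coefficients of the Padé polynomials. -/
def padeConst (r : ℕ) : ℕ := 128 * r ^ 2 * 2 ^ r

theorem padeConst_pos {r : ℕ} (hr : 0 < r) : 0 < padeConst r := by
  unfold padeConst; positivity

theorem padeCoeff_le_padeConst_pow {r n k : ℕ} (hr : 0 < r) (hk : k ≤ n) :
    padeCoeff r n k ≤ padeConst r ^ (n + 1) := by
  have hpos : 1 ≤ r ^ 2 * 2 ^ r := Nat.one_le_iff_ne_zero.2 (by positivity)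
  calc padeCoeff r n k ≤ 8 * (4 * r ^ 2) ^ n := padeCoeff_le hr hk
    _ ≤ padeConst r * padeConst r ^ n := by
        have := Nat.le_mul_of_pos_right (r ^ 2) (Nat.two_pow_pos r)
        gcongr <;> unfold padeConst <;> lia
    _ = padeConst r ^ (n + 1) := (pow_succ' _ _).symm

theorem isSizeLE_padeP {r : ℕ} (hr : 0 < r) (n : ℕ) :
    IsSizeLE n (padeConst r ^ (n + 1)) (padeP r n) :=
  isSizeLE_sum_smul_X_pow fun k hk ↦ by
    rw [Nat.abs_cast]; exact_mod_cast padeCoeff_le_padeConst_pow hr hk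

theorem isSizeLE_padeQ {r : ℕ} (hr : 0 < r) (n : ℕ) :
    IsSizeLE n (padeConst r ^ (n + 1)) (padeQ r n) :=
  isSizeLE_sum_smul_X_pow fun k _ ↦ by
    rw [Nat.abs_cast]; exact_mod_cast padeCoeff_le_padeConst_pow hr (Nat.sub_le n k)

theorem natDegree_padeError_le {r : ℕ} (hr : 0 < r) (n : ℕ) :
    (padeError r n).natDegree ≤ r * n + 1 := by
  have hP := Nat.mul_le_mul_right r (isSizeLE_padeP hr n).1
  have hQ := Nat.mul_le_mul_right r (isSizeLE_padeQ hr n).1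
  rw [mul_comm r n]
  refine (natDegree_sub_le _ _).trans (max_le ?_ ?_)
  · refine natDegree_mul_le.trans ?_
    rw [natDegree_X, natDegree_expand]
    omega
  · rw [natDegree_expand]
    omega

theorem abs_taylor_one_padeError_coeff_le {r : ℕ} (hr : 0 < r) (n j : ℕ) :
    |(taylor 1 (padeError r n)).coeff j| ≤ padeConst r ^ (n + 1) := by
  set B : ℤ := 8 * (4 * r ^ 2) ^ n * 2 ^ (r * n + 1)
  have hchoose {m : ℕ} (hm : m ≤ r * n + 1) : (m.choose j : ℤ) ≤ 2 ^ (r * n + 1) := by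
    exact_mod_cast (Nat.choose_le_two_pow m j).trans (Nat.pow_le_pow_right two_pos hm)
  have hterm (k m : ℕ) (hk : k ≤ n) (hm : m ≤ r * n + 1) :
      0 ≤ (padeCoeff r n k : ℤ) * m.choose j ∧ (padeCoeff r n k : ℤ) * m.choose j ≤ B :=
    ⟨by positivity, mul_le_mul (by exact_mod_cast padeCoeff_le hr hk) (hchoose hm)
      (by positivity) (by positivity)⟩
  rw [taylor_one_padeError_coeff]
  calc _ ≤ ∑ _k ∈ range (n + 1), B := by
        refine (abs_sum_le_sum_abs _ _).trans (sum_le_sum fun k hk ↦ ?_)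
        have hk := Nat.lt_succ_iff.1 (mem_range.1 hk)
        have hrk := Nat.mul_le_mul_left r hk
        obtain ⟨hl₀, hl⟩ := hterm k (r * k + 1) hk (Nat.succ_le_succ hrk)
        obtain ⟨hr₀, hr⟩ := hterm (n - k) (r * k) (Nat.sub_le n k) (Nat.le_succ_of_le hrk)
        exact abs_sub_le_of_nonneg_of_le hl₀ hl hr₀ hr
    _ = (n + 1 : ℕ) * B := by rw [sum_const, card_range, nsmul_eq_mul]
    _ ≤ 2 ^ n * B := by
        have : (n + 1 : ℕ) ≤ (2 : ℤ) ^ n := by exact_mod_cast Nat.lt_two_pow_self (n := n)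
        gcongr
    _ = 16 * (8 * r ^ 2 * 2 ^ r) ^ n := by
        have height : (8 : ℤ) ^ n = 4 ^ n * 2 ^ n := by rw [← mul_pow]; norm_num
        simp only [B, mul_pow, height]
        ring
    _ ≤ padeConst r * padeConst r ^ n := by
        have hpos : (1 : ℤ) ≤ r ^ 2 * 2 ^ r := by
          exact_mod_cast Nat.one_le_iff_ne_zero.2 (by positivity)
        gcongr <;> unfold padeConst <;> push_cast <;> lia
    _ = padeConst r ^ (n + 1) := (pow_succ' _ _).symm

theorem exists_padeError_eq {r : ℕ} (hr : 2 ≤ r) (n : ℕ) :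
    ∃ H, IsSizeLE ((r - 2) * n) (padeConst r ^ (n + 1)) H ∧
      padeError r n = (X - 1) ^ (2 * n + 1) * H.comp (X - 1) := by
  have hr₀ : 0 < r := by omega
  obtain ⟨H, hH⟩ := X_pow_dvd_taylor_one_padeError hr n
  refine ⟨H, ⟨?_, fun j ↦ ?_⟩, ?_⟩
  · by_cases hH₀ : H = 0
    · simp [hH₀]
    have hdeg := natDegree_padeError_le hr₀ n
    rw [← natDegree_taylor _ 1, hH, natDegree_X_pow_mul _ hH₀] at hdeg
    obtain ⟨s, rfl⟩ := Nat.exists_eq_add_of_le hr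
    rw [Nat.add_sub_cancel_left]
    lia
  · rw [← coeff_X_pow_mul H (2 * n + 1), ← hH]
    exact_mod_cast abs_taylor_one_padeError_coeff_le hr₀ n _
  · have h := congrArg (taylor (-1)) hH
    rw [taylor_taylor, neg_add_cancel, taylor_zero, taylor_mul, taylor_X_pow] at h
    rw [h, taylor_apply, C_neg, C_1, ← sub_eq_add_neg]

theorem X_sub_one_pow_dvd_of_dvd_expand {R : Type*} [CommRing R] [IsDomain R] [CharZero R]
    {r m : ℕ} (hr : r ≠ 0) {p : R[X]} (h : (X - 1) ^ m ∣ expand R r p) : (X - 1) ^ m ∣ p := by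
  by_cases hp : p = 0
  · exact hp ▸ dvd_zero _
  obtain ⟨g, hpg, hg⟩ := exists_eq_pow_rootMultiplicity_mul_and_not_dvd p hp 1
  rw [C_1] at hpg hg
  set l := rootMultiplicity 1 p
  rw [hpg]
  suffices m ≤ l from (pow_dvd_pow _ this).mul_right _
  by_contra! hlm
  have hexpand : expand R r p =
      (X - 1) ^ l * ((∑ i ∈ range r, X ^ i) ^ l * expand R r g) := by
    rw [hpg, map_mul, map_pow, map_sub, expand_X, map_one, ← mul_geom_sum, mul_pow, mul_assoc]
  have hdvd : X - 1 ∣ (∑ i ∈ range r, X ^ i) ^ l * expand R r g := by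
    refine (mul_dvd_mul_iff_left (pow_ne_zero l (X_sub_C_ne_zero (1 : R)))).1 ?_
    rw [C_1, ← hexpand, ← pow_succ]
    exact (pow_dvd_pow _ hlm).trans h
  rw [← C_1, dvd_iff_isRoot] at hdvd hg
  refine hg ?_
  simpa [IsRoot, hr, eval_finsetSum, expand_eval] using hdvd

/-- The cross determinant of two consecutive Padé pairs. -/
noncomputable def padeDet (r n : ℕ) : ℤ[X] :=
  padeP r n * padeQ r (n + 1) - padeP r (n + 1) * padeQ r n

theorem natDegree_padeDet_le {r : ℕ} (hr : 0 < r) (n : ℕ) :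
    (padeDet r n).natDegree ≤ 2 * n + 1 := by
  have hP (m : ℕ) := (isSizeLE_padeP hr m).1
  have hQ (m : ℕ) := (isSizeLE_padeQ hr m).1
  refine (natDegree_sub_le _ _).trans (max_le ?_ ?_)
  · exact (natDegree_mul_le_of_le (hP n) (hQ (n + 1))).trans (by omega)
  · exact (natDegree_mul_le_of_le (hP (n + 1)) (hQ n)).trans (by omega)

theorem padeCoeff_zero_mul {r : ℕ} (hr : 2 ≤ r) (n : ℕ) :
    (padeCoeff r n 0 : ℚ) * n.factorial = r ^ n * prodMulAddOne r n := by
  have h := padeCoeff_mul_eq (by omega : 0 < r) 0 n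
  rw [zero_add, prodMulAddOne, prod_range_zero, Nat.factorial_zero, Nat.cast_one, one_mul,
    one_mul] at h
  refine mul_right_cancel₀ (prodMulSubOne_pos (by exact_mod_cast hr : (1 : ℚ) < r) n).ne' ?_
  linear_combination h

theorem padeCoeff_self_mul {r : ℕ} (hr : 0 < r) (n : ℕ) :
    (padeCoeff r n n : ℚ) * n.factorial = r ^ n * prodMulSubOne r n := by
  have h := padeCoeff_mul_eq hr n 0
  rw [add_zero, prodMulSubOne, prod_range_zero, Nat.factorial_zero, Nat.cast_one, mul_one,
    mul_one] at h
  refine mul_right_cancel₀ (prodMulAddOne_pos (r := r) r.cast_nonneg n).ne' ?_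
  linear_combination h

theorem padeDet_coeff_zero_ne_zero {r : ℕ} (hr : 2 ≤ r) (n : ℕ) : (padeDet r n).coeff 0 ≠ 0 := by
  have hP (m : ℕ) : (padeP r m).coeff 0 = padeCoeff r m 0 := by simp [padeP, coeff_X_pow]
  have hQ (m : ℕ) : (padeQ r m).coeff 0 = padeCoeff r m m := by simp [padeQ, coeff_X_pow]
  have hscaled : ((padeDet r n).coeff 0 * (n.factorial * (n + 1).factorial) : ℚ) =
      -2 * r ^ (2 * n + 1) * prodMulAddOne r n * prodMulSubOne r n := by
    have h₀ := padeCoeff_zero_mul hr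
    have h₁ := padeCoeff_self_mul (by omega : 0 < r)
    have hadd : prodMulAddOne r (n + 1) = prodMulAddOne r n * (r * (n + 1) + 1) :=
      prod_range_succ _ n
    have hsub : prodMulSubOne r (n + 1) = prodMulSubOne r n * (r * (n + 1) - 1) :=
      prod_range_succ _ n
    rw [padeDet, coeff_sub, mul_coeff_zero, mul_coeff_zero, hP, hP, hQ, hQ]
    calc _ = (padeCoeff r n 0 * n.factorial : ℚ) *
            (padeCoeff r (n + 1) (n + 1) * (n + 1).factorial) -
          (padeCoeff r (n + 1) 0 * (n + 1).factorial) * (padeCoeff r n n * n.factorial) := by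
          push_cast; ring
      _ = _ := by rw [h₀, h₁, h₀, h₁, hadd, hsub]; ring
  have hadd := prodMulAddOne_pos (r := r) r.cast_nonneg n
  have hsub := prodMulSubOne_pos (by exact_mod_cast hr : (1 : ℚ) < r) n
  intro h
  rw [h, Int.cast_zero, zero_mul] at hscaled
  have : 0 < 2 * (r : ℚ) ^ (2 * n + 1) * prodMulAddOne r n * prodMulSubOne r n := by positivity
  linarith

theorem X_sub_one_pow_dvd_padeDet {r : ℕ} (hr : 2 ≤ r) (n : ℕ) :
    (X - 1) ^ (2 * n + 1) ∣ padeDet r n := by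
  have herror (m : ℕ) : (X - 1) ^ (2 * m + 1) ∣ padeError r m := by
    obtain ⟨H, -, hH⟩ := exists_padeError_eq hr m
    exact hH ▸ dvd_mul_right _ _
  have hX : X * expand ℤ r (padeDet r n) = expand ℤ r (padeQ r (n + 1)) * padeError r n -
      expand ℤ r (padeQ r n) * padeError r (n + 1) := by
    simp only [padeDet, padeError, map_sub, map_mul]
    ring
  have hcoprime : IsCoprime ((X - 1 : ℤ[X]) ^ (2 * n + 1)) X :=
    IsCoprime.pow_left ⟨-1, 1, by ring⟩
  refine X_sub_one_pow_dvd_of_dvd_expand (by omega : r ≠ 0) (hcoprime.dvd_of_dvd_mul_left ?_)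
  rw [hX]
  exact dvd_sub ((herror n).mul_left _)
    (((pow_dvd_pow _ (by omega)).trans (herror (n + 1))).mul_left _)

theorem aeval_padeDet_ne_zero {K : Type*} [Field K] [CharZero K] {r : ℕ} (hr : 2 ≤ r) (n : ℕ)
    {x : K} (hx : x ≠ 1) : aeval x (padeDet r n) ≠ 0 := by
  have hdet : padeDet r n ≠ 0 := fun h ↦ padeDet_coeff_zero_ne_zero hr n (by rw [h, coeff_zero])
  obtain ⟨c, hc⟩ := X_sub_one_pow_dvd_padeDet hr n
  have hc₀ : c ≠ 0 := fun h ↦ hdet (by rw [hc, h, mul_zero])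
  have hdeg := natDegree_padeDet_le (by omega : 0 < r) n
  rw [hc, ← C_1, ((monic_X_sub_C (1 : ℤ)).pow _).natDegree_mul' hc₀, natDegree_pow,
    natDegree_X_sub_C] at hdeg
  rw [eq_C_of_natDegree_eq_zero (by omega : c.natDegree = 0)] at hc hc₀
  rw [hc, map_mul, map_pow, map_sub, aeval_X, map_one, aeval_C]
  exact mul_ne_zero (pow_ne_zero _ (sub_ne_zero.2 hx))
    (by simpa using C_ne_zero.1 hc₀)

section PadeForm

variable {K : Type*} [Field K] (r n : ℕ) (x y : K)

/-- The linear form `x * P (x ^ r) - y * Q (x ^ r)` in the Padé pair `(P, Q)` of degree `n`. It is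
small at every place where both `x` and `y` are close to a common `r`-th root of unity. -/
noncomputable def padeForm : K :=
  x * aeval (x ^ r) (padeP r n) - y * aeval (x ^ r) (padeQ r n)

variable {x y} in
theorem padeForm_mem {R : Subring K} (hx : x ∈ R) (hy : y ∈ R) : padeForm r n x y ∈ R := by
  have haeval (p : ℤ[X]) : aeval (x ^ r) p ∈ R :=
    Subalgebra.aeval_coe (subalgebraOfSubring R) ⟨x ^ r, R.pow_mem hx r⟩ p ▸ SetLike.coe_mem _
  exact R.sub_mem (R.mul_mem hx (haeval _)) (R.mul_mem hy (haeval _))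

variable {r} in
theorem padeForm_mul_mul {ζ : K} (hζ : ζ ^ r = 1) :
    padeForm r n (ζ * x) (ζ * y) = ζ * padeForm r n x y := by
  rw [padeForm, padeForm, mul_pow, hζ, one_mul]; ring

variable {r x} in
theorem padeForm_succ_ne_zero_of_padeForm_eq_zero [CharZero K] (hr : 2 ≤ r) (hx : x ≠ 0)
    (hxr : x ^ r ≠ 1) (h : padeForm r n x y = 0) : padeForm r (n + 1) x y ≠ 0 := by
  intro h'
  apply mul_ne_zero hx (aeval_padeDet_ne_zero hr n hxr)
  rw [padeForm] at h h'
  rw [padeDet, map_sub, map_mul, map_mul]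
  linear_combination aeval (x ^ r) (padeQ r (n + 1)) * h - aeval (x ^ r) (padeQ r n) * h'

end PadeForm

/-! ### Estimates at one place -/

section AbsoluteValue

variable {K : Type*} [Field K] (v : AbsoluteValue K ℝ)

theorem absoluteValue_eq_one_of_pow_eq_one {r : ℕ} (hr : r ≠ 0) {ζ : K} (hζ : ζ ^ r = 1) :
    v ζ = 1 :=
  (pow_eq_one_iff_of_nonneg (v.nonneg ζ) hr).1 (by rw [← v.map_pow, hζ, v.map_one])

theorem absoluteValue_intCast_le_abs (m : ℤ) : v m ≤ |(m : ℝ)| := by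
  rw [← v.apply_natAbs_eq, ← Int.cast_abs, Int.abs_eq_natAbs, Int.cast_natCast]
  exact v.apply_nat_le_self _

theorem absoluteValue_aeval_le {p : ℤ[X]} {d B : ℕ} (hp : IsSizeLE d B p) (x : K) :
    v (aeval x p) ≤ 2 ^ d * (B * max 1 (v x) ^ d) := by
  rw [aeval_eq_sum_range' (Nat.lt_succ_of_le hp.1)]
  calc v (∑ j ∈ range (d + 1), p.coeff j • x ^ j)
      ≤ ∑ _j ∈ range (d + 1), B * max 1 (v x) ^ d := by
        refine (v.sum_le _ _).trans (sum_le_sum fun j hj ↦ ?_)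
        rw [zsmul_eq_mul, v.map_mul, v.map_pow]
        gcongr
        · exact (absoluteValue_intCast_le_abs v _).trans (by exact_mod_cast hp.2 j)
        · calc v x ^ j ≤ max 1 (v x) ^ j := by gcongr; exact le_max_right _ _
            _ ≤ max 1 (v x) ^ d :=
              pow_le_pow_right₀ (le_max_left _ _) (Nat.lt_succ_iff.1 (mem_range.1 hj))
    _ = (d + 1 : ℕ) * (B * max 1 (v x) ^ d) := by rw [sum_const, card_range, nsmul_eq_mul]
    _ ≤ 2 ^ d * (B * max 1 (v x) ^ d) := by
        gcongr
        exact_mod_cast Nat.lt_two_pow_self (n := d)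

theorem absoluteValue_aeval_padeError_le {r : ℕ} (hr : 2 ≤ r) (n : ℕ) (u : K) {d : ℝ}
    (hu : v (u - 1) ≤ d * max 1 (v u)) :
    v (aeval u (padeError r n)) ≤
      (4 ^ r * padeConst r) ^ (n + 1) * max 1 (v u) ^ (r * n + 1) * d ^ (2 * n + 1) := by
  obtain ⟨H, hH, hfactor⟩ := exists_padeError_eq hr n
  set M := max 1 (v u)
  have hM : 1 ≤ M := le_max_left _ _
  have hHval : v (aeval (u - 1) H) ≤ 4 ^ (r * (n + 1)) * padeConst r ^ (n + 1) *
      M ^ ((r - 2) * n) := by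
    have hM₂ : max 1 (v (u - 1)) ≤ 2 * M := by
      have := v.sub_le_add u 1
      rw [v.map_one] at this
      have : v u ≤ M := le_max_right _ _
      exact max_le (by linarith) (by linarith)
    calc v (aeval (u - 1) H)
        ≤ 2 ^ ((r - 2) * n) * ((padeConst r ^ (n + 1) : ℕ) * (2 * M) ^ ((r - 2) * n)) := by
          refine (absoluteValue_aeval_le v hH _).trans ?_
          gcongr
      _ = 4 ^ ((r - 2) * n) * padeConst r ^ (n + 1) * M ^ ((r - 2) * n) := by
          rw [show (4 : ℝ) = 2 * 2 by norm_num, mul_pow, mul_pow]; push_cast; ring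
      _ ≤ 4 ^ (r * (n + 1)) * padeConst r ^ (n + 1) * M ^ ((r - 2) * n) := by
          gcongr
          · norm_num
          · omega
          · omega
  have hexp : r * n + 1 = (2 * n + 1) + (r - 2) * n := by
    obtain ⟨s, rfl⟩ := Nat.exists_eq_add_of_le hr
    rw [Nat.add_sub_cancel_left]; ring
  have hdM : 0 ≤ d * M := (v.nonneg _).trans hu
  rw [hfactor, map_mul, map_pow, aeval_comp, map_sub, aeval_X, map_one, v.map_mul, v.map_pow]
  calc v (u - 1) ^ (2 * n + 1) * v (aeval (u - 1) H)
      ≤ (d * M) ^ (2 * n + 1) *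
        (4 ^ (r * (n + 1)) * padeConst r ^ (n + 1) * M ^ ((r - 2) * n)) := by gcongr
    _ = _ := by rw [hexp, pow_add M, mul_pow, mul_pow, pow_mul]; ring

theorem absoluteValue_aeval_pow_padeQ_le {r : ℕ} (hr : 0 < r) (n : ℕ) (u : K) :
    v (aeval (u ^ r) (padeQ r n)) ≤ (4 ^ r * padeConst r) ^ (n + 1) * max 1 (v u) ^ (r * n) := by
  have hmax : max 1 (v (u ^ r)) ≤ max 1 (v u) ^ r := by
    rw [v.map_pow]
    exact max_le (one_le_pow₀ (le_max_left _ _))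
      (pow_le_pow_left₀ (v.nonneg u) (le_max_right _ _) r)
  have htwo : (2 : ℝ) ^ n ≤ (4 ^ r) ^ (n + 1) := by
    have hexp : n ≤ r * (n + 1) := by nlinarith
    rw [← pow_mul]
    calc (2 : ℝ) ^ n ≤ 4 ^ n := by gcongr; norm_num
      _ ≤ 4 ^ (r * (n + 1)) := pow_le_pow_right₀ (by norm_num) hexp
  calc _ ≤ 2 ^ n * ((padeConst r ^ (n + 1) : ℕ) * max 1 (v (u ^ r)) ^ n) :=
        absoluteValue_aeval_le v (isSizeLE_padeQ hr n) _
    _ ≤ (4 ^ r) ^ (n + 1) * ((padeConst r ^ (n + 1) : ℕ) * (max 1 (v u) ^ r) ^ n) := by gcongr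
    _ = _ := by rw [← pow_mul (max 1 (v u))]; push_cast; ring

theorem absoluteValue_padeForm_le {r : ℕ} (hr : 2 ≤ r) (n : ℕ) (u u' : K) {d d' D : ℝ}
    (hu : v (u - 1) ≤ d * max 1 (v u)) (hu' : v (u' - 1) ≤ d' * max 1 (v u'))
    (hd : d ^ (2 * n + 1) ≤ D) (hd' : d' ≤ D) (hD : 0 ≤ D) :
    v (padeForm r n u u') ≤
      (2 * 4 ^ r * padeConst r) ^ (n + 1) * max 1 (v u) ^ (r * n + 1) * max 1 (v u') * D := by
  set M := max 1 (v u)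
  set M' := max 1 (v u')
  set C : ℝ := (4 ^ r * padeConst r) ^ (n + 1)
  have hM : 1 ≤ M := le_max_left _ _
  have hM' : 1 ≤ M' := le_max_left _ _
  have herror : v (aeval u (padeError r n)) ≤ C * M ^ (r * n + 1) * M' * D :=
    calc _ ≤ C * M ^ (r * n + 1) * 1 * d ^ (2 * n + 1) := by
          rw [mul_one]; exact absoluteValue_aeval_padeError_le v hr n u hu
      _ ≤ C * M ^ (r * n + 1) * M' * D := by
          gcongr
          exact pow_nonneg (nonneg_of_mul_nonneg_left ((v.nonneg _).trans hu) (by positivity)) _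
  have hQ : v (aeval (u ^ r) (padeQ r n)) ≤ C * M ^ (r * n + 1) :=
    (absoluteValue_aeval_pow_padeQ_le v (by omega) n u).trans (by gcongr; exact Nat.le_succ _)
  have hsplit : padeForm r n u u' =
      aeval u (padeError r n) - (u' - 1) * aeval (u ^ r) (padeQ r n) := by
    rw [padeForm, padeError, map_sub, map_mul, aeval_X, expand_aeval, expand_aeval]; ring
  have htwo : 2 * C ≤ (2 * 4 ^ r * padeConst r) ^ (n + 1) := by
    rw [mul_assoc 2, mul_pow]
    gcongr
    exact le_self_pow₀ one_le_two n.succ_ne_zero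
  calc _ ≤ v (aeval u (padeError r n)) + v ((u' - 1) * aeval (u ^ r) (padeQ r n)) := by
        rw [hsplit]; exact v.sub_le_add _ _
    _ ≤ C * M ^ (r * n + 1) * M' * D + (D * M') * (C * M ^ (r * n + 1)) := by
        rw [v.map_mul]
        gcongr
        exact hu'.trans (by gcongr)
    _ = 2 * C * M ^ (r * n + 1) * M' * D := by ring
    _ ≤ _ := by gcongr

theorem half_separation_mul_le {ζ ζ' ξ : K} {δ : ℝ} (hζ : v ζ = 1) (hζ' : v ζ' = 1)
    (hδ : δ ≤ v (ζ - ζ')) (hle : v (1 - ζ' * ξ) ≤ v (1 - ζ * ξ)) :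
    δ / 2 * max 1 (v ξ) ≤ v (1 - ζ * ξ) := by
  have hone : v (ζ - ζ') ≤ 2 * v (1 - ζ * ξ) :=
    calc v (ζ - ζ') = v (ζ * (1 - ζ' * ξ) - ζ' * (1 - ζ * ξ)) := by ring_nf
      _ ≤ v (1 - ζ' * ξ) + v (1 - ζ * ξ) := by
        simpa only [v.map_mul, hζ, hζ', one_mul] using
          v.sub_le_add (ζ * (1 - ζ' * ξ)) (ζ' * (1 - ζ * ξ))
      _ ≤ 2 * v (1 - ζ * ξ) := by linarith
  have hξ : v (ζ - ζ') * v ξ ≤ 2 * v (1 - ζ * ξ) :=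
    calc v (ζ - ζ') * v ξ = v ((1 - ζ' * ξ) - (1 - ζ * ξ)) := by rw [← v.map_mul]; ring_nf
      _ ≤ v (1 - ζ' * ξ) + v (1 - ζ * ξ) := v.sub_le_add _ _
      _ ≤ 2 * v (1 - ζ * ξ) := by linarith
  have hδξ : δ * v ξ ≤ v (ζ - ζ') * v ξ := mul_le_mul_of_nonneg_right hδ (v.nonneg ξ)
  rcases max_cases 1 (v ξ) with ⟨h, -⟩ | ⟨h, -⟩ <;> rw [h] <;> linarith

theorem exists_separation_nthRootsFinset (r : ℕ) :
    ∃ δ > 0, ∀ ζ ∈ nthRootsFinset r (1 : K), ∀ ζ' ∈ nthRootsFinset r (1 : K), ζ ≠ ζ' →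
      δ ≤ v (ζ - ζ') := by
  classical
  set D := (nthRootsFinset r (1 : K)).offDiag.image fun p ↦ v (p.1 - p.2)
  have hpos : ∀ x ∈ insert 1 D, 0 < x := by
    intro x hx
    rcases mem_insert.1 hx with rfl | hx
    · exact one_pos
    · obtain ⟨p, hp, rfl⟩ := mem_image.1 hx
      exact v.pos (sub_ne_zero.2 (mem_offDiag.1 hp).2.2)
  refine ⟨(insert 1 D).min' (insert_nonempty _ _), hpos _ (min'_mem _ _), ?_⟩
  intro ζ hζ ζ' hζ' hne
  exact min'_le _ _ (mem_insert_of_mem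
    (mem_image.2 ⟨(ζ, ζ'), mem_offDiag.2 ⟨hζ, hζ', hne⟩, rfl⟩))

theorem exists_nearest_root_of_unity {r : ℕ} (hr : 0 < r) {ω : K} (hω : IsPrimitiveRoot ω r) :
    ∃ c > 0, ∀ ξ : K, ∃ ζ : K, ζ ^ r = 1 ∧
      c * max 1 (v ξ) ^ (r - 1) * v (ζ * ξ - 1) ≤ v (1 - ξ ^ r) := by
  classical
  obtain ⟨δ, hδ, hsep⟩ := exists_separation_nthRootsFinset v r
  refine ⟨(δ / 2) ^ (r - 1), by positivity, fun ξ ↦ ?_⟩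
  set Z := nthRootsFinset r (1 : K)
  have hval (ζ : K) (hζ : ζ ∈ Z) : v ζ = 1 :=
    absoluteValue_eq_one_of_pow_eq_one v hr.ne' ((mem_nthRootsFinset hr 1).1 hζ)
  obtain ⟨ζ₀, hζ₀, hmin⟩ := exists_min_image Z (fun ζ ↦ v (1 - ζ * ξ))
    ⟨1, one_mem_nthRootsFinset hr⟩
  refine ⟨ζ₀, (mem_nthRootsFinset hr 1).1 hζ₀, ?_⟩
  have hfactor : v (1 - ξ ^ r) = v (1 - ζ₀ * ξ) * ∏ ζ ∈ Z.erase ζ₀, v (1 - ζ * ξ) := by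
    rw [mul_prod_erase Z (fun ζ ↦ v (1 - ζ * ξ)) hζ₀, ← map_prod,
      ← hω.pow_sub_pow_eq_prod_sub_mul _ _ hr, one_pow]
  have hcard : #(Z.erase ζ₀) = r - 1 := by rw [card_erase_of_mem hζ₀, hω.card_nthRootsFinset]
  calc _ = v (1 - ζ₀ * ξ) * ∏ ζ ∈ Z.erase ζ₀, δ / 2 * max 1 (v ξ) := by
        rw [prod_const, hcard, mul_pow, v.map_sub, mul_comm]
    _ ≤ v (1 - ζ₀ * ξ) * ∏ ζ ∈ Z.erase ζ₀, v (1 - ζ * ξ) := by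
        gcongr with ζ hζ
        obtain ⟨hne, hζ⟩ := mem_erase.1 hζ
        exact half_separation_mul_le v (hval ζ hζ) (hval ζ₀ hζ₀) (hsep ζ hζ ζ₀ hζ₀ hne)
          (hmin ζ hζ)
    _ = v (1 - ξ ^ r) := hfactor.symm

end AbsoluteValue

/-- The real number `x` rounded down to a multiple of `1 / Q` and truncated to `[0, T / Q]`. -/
noncomputable def truncFloor (Q T : ℕ) (x : ℝ) : ℝ := (min ⌊Q * x⌋₊ T : ℕ) / Q

theorem truncFloor_le_max {Q : ℕ} (hQ : 0 < Q) (T : ℕ) (x : ℝ) : truncFloor Q T x ≤ max 0 x := by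
  have hQ₀ : (0 : ℝ) < Q := by exact_mod_cast hQ
  rw [truncFloor, div_le_iff₀' hQ₀, mul_max_of_nonneg _ _ hQ₀.le, mul_zero]
  rcases le_total 0 (Q * x) with hx | hx
  · exact (Nat.cast_le.2 (min_le_left _ _)).trans ((Nat.floor_le hx).trans (le_max_right _ _))
  · simp [Nat.floor_of_nonpos hx]

theorem sub_one_div_le_truncFloor {Q T : ℕ} (hQ : 0 < Q) {x : ℝ} (hx : ⌊Q * x⌋₊ ≤ T) :
    x - 1 / Q ≤ truncFloor Q T x := by
  rw [truncFloor, min_eq_left hx, sub_le_iff_le_add, ← add_div, le_div_iff₀' (by exact_mod_cast hQ)]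
  exact (Nat.lt_floor_add_one (Q * x)).le

theorem le_sum_mul_truncFloor {ι : Type*} [Fintype ι] (m : ι → ℕ) {c ε : ℝ} {Q T : ℕ} (hQ : 0 < Q)
    (hε : (∑ i, (m i : ℝ)) / Q ≤ ε) (hT : Q * c ≤ T) {e : ι → ℝ} (he : c + ε ≤ ∑ i, m i * e i) :
    c ≤ ∑ i, m i * truncFloor Q T (e i) := by
  have hQ₀ : (0 : ℝ) < Q := by exact_mod_cast hQ
  have hnonneg (i : ι) : 0 ≤ m i * truncFloor Q T (e i) := by unfold truncFloor; positivity
  by_cases hlarge : ∃ i, 0 < m i ∧ T ≤ ⌊Q * e i⌋₊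
  · obtain ⟨i, hi, hTi⟩ := hlarge
    calc c ≤ T / Q := (le_div_iff₀' hQ₀).2 hT
      _ ≤ m i * truncFloor Q T (e i) := by
        rw [truncFloor, min_eq_right hTi]
        exact le_mul_of_one_le_left (by positivity) (by exact_mod_cast hi)
      _ ≤ ∑ i, m i * truncFloor Q T (e i) :=
        single_le_sum (fun j _ ↦ hnonneg j) (mem_univ i)
  · push Not at hlarge
    calc c ≤ ∑ i, m i * e i - (∑ i, (m i : ℝ)) / Q := by linarith
      _ = ∑ i, m i * (e i - 1 / Q) := by
        rw [sum_div, ← sum_sub_distrib]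
        exact sum_congr rfl fun i _ ↦ by ring
      _ ≤ ∑ i, m i * truncFloor Q T (e i) := by
        refine sum_le_sum fun i _ ↦ ?_
        rcases Nat.eq_zero_or_pos (m i) with hi | hi
        · simp [hi]
        · exact mul_le_mul_of_nonneg_left (sub_one_div_le_truncFloor hQ (hlarge i hi).le)
            (Nat.cast_nonneg _)

theorem exists_finite_exponent_grid {ι : Type*} [Fintype ι] (m : ι → ℕ) (c : ℝ) {ε : ℝ}
    (hε : 0 < ε) :
    ∃ G : Set (ι → ℝ), G.Finite ∧ (∀ g ∈ G, 0 ≤ g ∧ c ≤ ∑ i, m i * g i) ∧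
      ∀ e : ι → ℝ, c + ε ≤ ∑ i, m i * e i → ∃ g ∈ G, ∀ i, g i ≤ max 0 (e i) := by
  obtain ⟨Q, hQ⟩ := exists_nat_gt (max 1 ((∑ i, (m i : ℝ)) / ε))
  have hQpos : 0 < Q := by exact_mod_cast one_pos.trans (max_lt_iff.1 hQ).1
  have hQsum : (∑ i, (m i : ℝ)) / Q ≤ ε :=
    (div_le_comm₀ (by exact_mod_cast hQpos) hε).2 (max_lt_iff.1 hQ).2.le
  obtain ⟨T, hT⟩ := exists_nat_ge (Q * c)
  let grid (k : ι → Fin (T + 1)) (i : ι) : ℝ := (k i : ℕ) / Q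
  refine ⟨Set.range grid ∩ {g | c ≤ ∑ i, m i * g i}, (Set.finite_range grid).inter_of_left _, ?_,
    fun e he ↦ ⟨fun i ↦ truncFloor Q T (e i), ⟨?_, le_sum_mul_truncFloor m hQpos hQsum hT he⟩,
      fun i ↦ truncFloor_le_max hQpos T (e i)⟩⟩
  · rintro _ ⟨⟨k, rfl⟩, hk⟩
    exact ⟨fun i ↦ by positivity, hk⟩
  · exact ⟨fun i ↦ ⟨min ⌊Q * e i⌋₊ T, by omega⟩, rfl⟩

/-! ### Thue's method -/

open Real in
theorem log_absoluteValue_padeForm_le {K : Type*} [Field K] (v : AbsoluteValue K ℝ) {r : ℕ}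
    (hr : 2 ≤ r) (n : ℕ) {ζ x y : K} {γ γ' : ℝ} (hζ : ζ ^ r = 1)
    (hx : v (ζ * x - 1) ≤ 2 * exp (-γ) * max 1 (v x))
    (hy : v (ζ * y - 1) ≤ 2 * exp (-γ') * max 1 (v y)) (hγ : (2 * n + 1) * γ ≤ γ')
    (hne : padeForm r n x y ≠ 0) :
    log (v (padeForm r n x y)) ≤ (n + 1) * log (8 * 4 ^ r * padeConst r) +
      (r * n + 1) * log⁺ (v x) + log⁺ (v y) - (2 * n + 1) * γ := by
  have hvζ : v ζ = 1 := absoluteValue_eq_one_of_pow_eq_one v (by omega) hζ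
  have hvmul (z : K) : v (ζ * z) = v z := by rw [v.map_mul, hvζ, one_mul]
  have hC : (0 : ℝ) < padeConst r := by exact_mod_cast padeConst_pos (by omega)
  have hbound : v (padeForm r n x y) ≤ (8 * 4 ^ r * padeConst r) ^ (n + 1) *
      max 1 (v x) ^ (r * n + 1) * max 1 (v y) * exp (-((2 * n + 1) * γ)) :=
    calc v (padeForm r n x y) = v (padeForm r n (ζ * x) (ζ * y)) := by
          rw [padeForm_mul_mul _ _ _ hζ, hvmul]
      _ ≤ (2 * 4 ^ r * padeConst r) ^ (n + 1) * max 1 (v x) ^ (r * n + 1) * max 1 (v y) *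
            (4 ^ (n + 1) * exp (-((2 * n + 1) * γ))) := by
          rw [← hvmul x] at hx ⊢
          rw [← hvmul y] at hy ⊢
          refine absoluteValue_padeForm_le v hr n _ _ hx hy ?_ ?_ (by positivity)
          · rw [mul_pow, ← exp_nat_mul]
            have : (2 : ℝ) ^ (2 * n + 1) ≤ 4 ^ (n + 1) := by
              rw [show (4 : ℝ) = 2 ^ 2 by norm_num, ← pow_mul]
              exact pow_le_pow_right₀ one_le_two (by omega)
            gcongr
            push_cast; linarith
          · gcongr
            exact (by norm_num : (2 : ℝ) ≤ 4).trans (le_self_pow₀ (by norm_num) n.succ_ne_zero)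
      _ = _ := by
          rw [show (8 : ℝ) * 4 ^ r * padeConst r = 4 * (2 * 4 ^ r * padeConst r) by ring,
            mul_pow 4]
          ring
  have hM (z : K) : max 1 (v z) ≠ 0 := (zero_lt_one.trans_le (le_max_left _ _)).ne'
  refine (log_le_log (v.pos hne) hbound).trans_eq ?_
  rw [log_mul, log_mul, log_mul, log_pow, log_pow, log_exp, posLog_eq_log_max_one (v.nonneg x),
    posLog_eq_log_max_one (v.nonneg y)]
  · push_cast; ring
  all_goals simp [hM, hC.ne']

theorem exists_nat_odd_mul_le_lt {a b : ℝ} (ha : 0 < a) (hab : a ≤ b) :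
    ∃ m : ℕ, (2 * m + 1) * a ≤ b ∧ b < (2 * m + 3) * a := by
  have hratio : 1 ≤ b / a := (one_le_div ha).2 hab
  refine ⟨⌊(b / a - 1) / 2⌋₊, ?_, ?_⟩
  · rw [← le_div_iff₀ ha]
    linarith [Nat.floor_le (show 0 ≤ (b / a - 1) / 2 by linarith)]
  · rw [← div_lt_iff₀ ha]
    linarith [Nat.lt_floor_add_one ((b / a - 1) / 2)]

/-- A ring of `S`-integers in a field, as the Thue-Siegel method sees it: a subring with finitely
many absolute values (the places in `S`, with their local degrees `mult`) such that nonzero elements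
have norm at least one and elements of bounded height are finite in number. -/
structure SIntegerRing (K ι : Type*) [Field K] [Fintype ι] where
  ring : Subring K
  abv : ι → AbsoluteValue K ℝ
  mult : ι → ℕ
  one_le_prod : ∀ x ∈ ring, x ≠ 0 → 1 ≤ ∏ i, abv i x ^ mult i
  northcott : ∀ B : ℝ, {x ∈ ring | ∑ i, mult i * Real.posLog (abv i x) ≤ B}.Finite

namespace SIntegerRing

open Real

variable {K ι : Type*} [Field K] [Fintype ι] (V : SIntegerRing K ι)

/-- The logarithmic height of an element of `V.ring`; the other places contribute nothing. -/
noncomputable def logHeight (x : K) : ℝ := ∑ i, V.mult i * log⁺ (V.abv i x)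

theorem logHeight_eq_zero_of_forall {x : K} (h : ∀ i, V.abv i x ≤ 1) : V.logHeight x = 0 :=
  sum_eq_zero fun i _ ↦ by
    rw [(posLog_eq_zero_iff _).2 (by rw [abs_of_nonneg ((V.abv i).nonneg x)]; exact h i), mul_zero]

theorem ne_zero_of_logHeight_pos {x : K} (h : 0 < V.logHeight x) : x ≠ 0 := by
  rintro rfl
  exact h.ne' (V.logHeight_eq_zero_of_forall fun i ↦ (map_zero (V.abv i)).trans_le zero_le_one)

theorem pow_ne_one_of_logHeight_pos {x : K} (h : 0 < V.logHeight x) {r : ℕ} (hr : r ≠ 0) :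
    x ^ r ≠ 1 := fun hx ↦
  h.ne' (V.logHeight_eq_zero_of_forall fun i ↦
    (absoluteValue_eq_one_of_pow_eq_one (V.abv i) hr hx).le)

theorem sum_mult_mul_log_nonneg {x : K} (hx : x ∈ V.ring) (h0 : x ≠ 0) :
    0 ≤ ∑ i, V.mult i * log (V.abv i x) := by
  have hprod := log_nonneg (V.one_le_prod x hx h0)
  rw [log_prod fun i _ ↦ (pow_pos ((V.abv i).pos h0) _).ne'] at hprod
  simpa only [log_pow] using hprod

theorem exists_logHeight_gt {s : Set K} (hs : s ⊆ V.ring) (hinf : s.Infinite) (B : ℝ) :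
    ∃ x ∈ s, B < V.logHeight x := by
  by_contra! h
  exact hinf ((V.northcott B).subset fun x hx ↦ ⟨hs hx, h x hx⟩)

/-- The elements of `V.ring` which at each place `i` approximate the root of unity `(ζ i)⁻¹` to
exponent `g i` with respect to the height. -/
def approxClass (ζ : ι → K) (g : ι → ℝ) : Set K :=
  {x ∈ V.ring | ∀ i, V.abv i (ζ i * x - 1) ≤
    2 * exp (-(g i * V.logHeight x)) * max 1 (V.abv i x)}

variable {r : ℕ} {ζ : ι → K} {g : ι → ℝ} {x y : K}

theorem mul_logHeight_le_of_padeForm_ne_zero (hr : 2 ≤ r) (hζ : ∀ i, ζ i ^ r = 1) (hg : 0 ≤ g)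
    (hx : x ∈ V.approxClass ζ g) (hy : y ∈ V.approxClass ζ g) {n : ℕ}
    (hxy : (2 * n + 1) * V.logHeight x ≤ V.logHeight y) (hne : padeForm r n x y ≠ 0) :
    (2 * n + 1) * (∑ i, V.mult i * g i) * V.logHeight x ≤
      (n + 1) * ((∑ i, (V.mult i : ℝ)) * log (8 * 4 ^ r * padeConst r)) +
      (r * n + 1) * V.logHeight x + V.logHeight y := by
  set C := log (8 * 4 ^ r * padeConst r)
  have hlocal (i : ι) : log (V.abv i (padeForm r n x y)) ≤ (n + 1) * C +
      (r * n + 1) * log⁺ (V.abv i x) + log⁺ (V.abv i y) - (2 * n + 1) * (g i * V.logHeight x) := by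
    refine log_absoluteValue_padeForm_le (V.abv i) hr n (hζ i) (hx.2 i) (hy.2 i) ?_ hne
    calc (2 * n + 1) * (g i * V.logHeight x) = g i * ((2 * n + 1) * V.logHeight x) := by ring
      _ ≤ g i * V.logHeight y := mul_le_mul_of_nonneg_left hxy (hg i)
  have hsum : 0 ≤ ∑ i, V.mult i * ((n + 1) * C + (r * n + 1) * log⁺ (V.abv i x) +
      log⁺ (V.abv i y) - (2 * n + 1) * (g i * V.logHeight x)) :=
    (V.sum_mult_mul_log_nonneg (padeForm_mem r n hx.1 hy.1) hne).trans <|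
      sum_le_sum fun i _ ↦ mul_le_mul_of_nonneg_left (hlocal i) (Nat.cast_nonneg _)
  have hexpand : ∑ i, (V.mult i : ℝ) * ((n + 1) * C + (r * n + 1) * log⁺ (V.abv i x) +
      log⁺ (V.abv i y) - (2 * n + 1) * (g i * V.logHeight x)) =
      (n + 1) * ((∑ i, (V.mult i : ℝ)) * C) + (r * n + 1) * V.logHeight x + V.logHeight y -
        (2 * n + 1) * (∑ i, V.mult i * g i) * V.logHeight x := by
    rw [sum_congr rfl fun i _ ↦ show _ = (n + 1) * (V.mult i * C) +
      (r * n + 1) * (V.mult i * log⁺ (V.abv i x)) + V.mult i * log⁺ (V.abv i y) -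
      (2 * n + 1) * (V.mult i * g i) * V.logHeight x by ring]
    simp only [sum_sub_distrib, sum_add_distrib, ← mul_sum, ← sum_mul]
    rfl
  linarith

theorem padeForm_eq_zero_of_logHeight_large (hr : 3 ≤ r) (hζ : ∀ i, ζ i ^ r = 1) (hg : 0 ≤ g)
    (hsum : r - 1 / 10 ≤ ∑ i, V.mult i * g i)
    (hx : x ∈ V.approxClass ζ g) (hy : y ∈ V.approxClass ζ g)
    (hlarge : 4 * ((∑ i, (V.mult i : ℝ)) * log (8 * 4 ^ r * padeConst r)) ≤ V.logHeight x)
    (hpos : 0 < V.logHeight x) {n : ℕ} (hn : 8 ≤ n)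
    (hlower : (2 * n + 1) * V.logHeight x ≤ V.logHeight y)
    (hupper : V.logHeight y ≤ (2 * n + 5) * V.logHeight x) : padeForm r n x y = 0 := by
  by_contra hne
  have hkey := V.mul_logHeight_le_of_padeForm_ne_zero (by omega) hζ hg hx hy hlower hne
  set ℓ := V.logHeight x
  set A := (∑ i, (V.mult i : ℝ)) * log (8 * 4 ^ r * padeConst r)
  have hn' : (8 : ℝ) ≤ n := by exact_mod_cast hn
  have hr' : (3 : ℝ) ≤ r := by exact_mod_cast hr
  have hle : (2 * n + 1) * (r - 1 / 10) * ℓ ≤ ((n + 1) / 4 + (r * n + 1) + (2 * n + 5)) * ℓ :=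
    calc (2 * n + 1) * (r - 1 / 10) * ℓ
        ≤ (2 * n + 1) * (∑ i, V.mult i * g i) * ℓ := by gcongr
      _ ≤ (n + 1) * A + (r * n + 1) * ℓ + V.logHeight y := hkey
      _ ≤ (n + 1) * (ℓ / 4) + (r * n + 1) * ℓ + (2 * n + 5) * ℓ := by
          gcongr
          linarith
      _ = _ := by ring
  -- The coefficient of `n` is about `2 * r` on the left and `r + 2` on the right; `2 < r` decides.
  have := le_of_mul_le_mul_right hle hpos
  nlinarith [mul_nonneg (sub_nonneg.2 hr') (n.cast_nonneg (α := ℝ))]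

/- Thue's principle: two elements of very different large heights would make two consecutive Padé
forms vanish. -/
theorem finite_approxClass [CharZero K] (hr : 3 ≤ r) (hζ : ∀ i, ζ i ^ r = 1) (hg : 0 ≤ g)
    (hsum : r - 1 / 10 ≤ ∑ i, V.mult i * g i) : (V.approxClass ζ g).Finite := by
  by_contra hinf
  have hsub : V.approxClass ζ g ⊆ V.ring := fun x hx ↦ hx.1
  set A := (∑ i, (V.mult i : ℝ)) * log (8 * 4 ^ r * padeConst r)
  obtain ⟨x, hx, hxA⟩ := V.exists_logHeight_gt hsub hinf (max 0 (4 * A))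
  obtain ⟨hpos, hlarge⟩ := max_lt_iff.1 hxA
  obtain ⟨y, hy, hxy⟩ := V.exists_logHeight_gt hsub hinf (19 * V.logHeight x)
  obtain ⟨m, hlower, hupper⟩ := exists_nat_odd_mul_le_lt hpos (by linarith : V.logHeight x ≤ _)
  obtain ⟨n, rfl⟩ : ∃ n, m = n + 1 := Nat.exists_eq_succ_of_ne_zero <| by
    rintro rfl
    norm_num at hupper; linarith
  have hn : 8 ≤ n := by
    have : (19 : ℝ) < 2 * (n + 1 : ℕ) + 3 := lt_of_mul_lt_mul_right (hxy.trans hupper) hpos.le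
    have : 19 < 2 * (n + 1) + 3 := by exact_mod_cast this
    omega
  push_cast at hlower hupper
  have hvanish {k : ℕ} :=
    V.padeForm_eq_zero_of_logHeight_large hr hζ hg hsum hx hy hlarge.le hpos (n := k)
  exact padeForm_succ_ne_zero_of_padeForm_eq_zero n y (by omega) (V.ne_zero_of_logHeight_pos hpos)
    (V.pow_ne_one_of_logHeight_pos hpos (by omega))
    (hvanish hn (by nlinarith) (by nlinarith))
    (hvanish (by omega) (by push_cast; nlinarith) (by push_cast; nlinarith))

theorem mem_approxClass (hζ : ∀ i, V.abv i (ζ i) = 1) (hx : x ∈ V.ring)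
    (hne : ∀ i, ζ i * x ≠ 1) (hpos : 0 < V.logHeight x)
    (hg : ∀ i, g i ≤ max 0
      ((log⁺ (V.abv i x) - log (V.abv i (ζ i * x - 1))) / V.logHeight x)) :
    x ∈ V.approxClass ζ g := by
  refine ⟨hx, fun i ↦ ?_⟩
  have hM : 0 < max 1 (V.abv i x) := one_pos.trans_le (le_max_left _ _)
  rcases le_max_iff.1 (hg i) with hgi | hgi
  · have hle : V.abv i (ζ i * x - 1) ≤ 2 * max 1 (V.abv i x) := by
      have := (V.abv i).sub_le_add (ζ i * x) 1
      rw [map_mul, hζ, one_mul, map_one] at this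
      linarith [le_max_left 1 (V.abv i x), le_max_right 1 (V.abv i x)]
    have hexp : 1 ≤ exp (-(g i * V.logHeight x)) :=
      one_le_exp (neg_nonneg.2 (mul_nonpos_of_nonpos_of_nonneg hgi hpos.le))
    nlinarith
  · rw [le_div_iff₀ hpos, posLog_eq_log_max_one ((V.abv i).nonneg x)] at hgi
    have hv : 0 < V.abv i (ζ i * x - 1) := (V.abv i).pos (sub_ne_zero.2 (hne i))
    calc V.abv i (ζ i * x - 1) = exp (log (V.abv i (ζ i * x - 1))) := (exp_log hv).symm
      _ ≤ exp (-(g i * V.logHeight x) + log (max 1 (V.abv i x))) := exp_le_exp.2 (by linarith)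
      _ = exp (-(g i * V.logHeight x)) * max 1 (V.abv i x) := by rw [exp_add, exp_log hM]
      _ ≤ _ := by nlinarith [mul_pos (exp_pos (-(g i * V.logHeight x))) hM]

theorem exists_roots_of_unity_sum_log_le (hr : 0 < r) {ω : K} (hω : IsPrimitiveRoot ω r) :
    ∃ κ : ℝ, ∀ x : K, x ^ r ≠ 1 → ∏ i, V.abv i (1 - x ^ r) ^ V.mult i ≤ 1 →
      ∃ ζ : ι → K, (∀ i, ζ i ^ r = 1) ∧ r * V.logHeight x - κ ≤
        ∑ i, V.mult i * (log⁺ (V.abv i x) - log (V.abv i (ζ i * x - 1))) := by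
  choose c hc hnear using fun i ↦ exists_nearest_root_of_unity (V.abv i) hr hω
  refine ⟨-∑ i, V.mult i * log (c i), fun x hx hprod ↦ ?_⟩
  choose ζ hζ hle using fun i ↦ hnear i x
  refine ⟨ζ, hζ, ?_⟩
  have hlocal (i : ι) : log (c i) + (r - 1 : ℕ) * log⁺ (V.abv i x) +
      log (V.abv i (ζ i * x - 1)) ≤ log (V.abv i (1 - x ^ r)) := by
    have hv : 0 < V.abv i (ζ i * x - 1) := (V.abv i).pos <| sub_ne_zero.2 fun h ↦
      hx (by rw [← one_pow r, ← h, mul_pow, hζ, one_mul])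
    rw [posLog_eq_log_max_one ((V.abv i).nonneg x), ← log_pow, ← log_mul (hc i).ne' (by positivity),
      ← log_mul (mul_pos (hc i) (by positivity)).ne' hv.ne']
    exact log_le_log (mul_pos (mul_pos (hc i) (by positivity)) hv) (hle i)
  have hglobal : ∑ i, V.mult i * log (V.abv i (1 - x ^ r)) ≤ 0 := by
    have hv (i : ι) : 0 < V.abv i (1 - x ^ r) := (V.abv i).pos (sub_ne_zero.2 hx.symm)
    have := log_nonpos (prod_nonneg fun i _ ↦ (pow_pos (hv i) _).le) hprod
    rw [log_prod fun i _ ↦ (pow_pos (hv i) _).ne'] at this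
    simpa only [log_pow] using this
  rw [logHeight, sub_neg_eq_add, mul_sum, ← sum_add_distrib, ← sub_nonneg, ← sum_sub_distrib]
  rw [← neg_nonneg, ← sum_neg_distrib] at hglobal
  refine hglobal.trans (sum_le_sum fun i _ ↦ ?_)
  have := mul_le_mul_of_nonneg_left (hlocal i) (Nat.cast_nonneg (α := ℝ) (V.mult i))
  rw [Nat.cast_sub (by omega), Nat.cast_one] at this
  linarith

theorem finite_setOf_prod_one_sub_pow_le_one [CharZero K] (hr : 3 ≤ r) {ω : K}
    (hω : IsPrimitiveRoot ω r) :
    {x ∈ V.ring | ∏ i, V.abv i (1 - x ^ r) ^ V.mult i ≤ 1}.Finite := by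
  obtain ⟨κ, hκ⟩ := V.exists_roots_of_unity_sum_log_le (by omega) hω
  obtain ⟨G, hGfin, hG, hgrid⟩ :=
    exists_finite_exponent_grid V.mult (r - 1 / 10 : ℝ) (ε := 1 / 20) (by norm_num)
  set Z : Set (ι → K) := {ζ | ∀ i, ζ i ∈ nthRootsFinset r (1 : K)}
  have hZ : Z.Finite := Set.Finite.pi' fun _ ↦ finite_toSet _
  have hroot {ζ : ι → K} (hζ : ζ ∈ Z) (i : ι) : ζ i ^ r = 1 :=
    (mem_nthRootsFinset (by omega) 1).1 (hζ i)
  have hclass : (⋃ ζ ∈ Z, ⋃ g ∈ G, V.approxClass ζ g).Finite :=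
    hZ.biUnion fun ζ hζ ↦ hGfin.biUnion fun g hg ↦
      V.finite_approxClass hr (hroot hζ) (hG g hg).1 (hG g hg).2
  refine ((V.northcott (max 0 (20 * κ))).union hclass).subset fun x hx ↦ or_iff_not_imp_left.2 ?_
  intro hlarge
  obtain ⟨hpos, hκx⟩ : 0 < V.logHeight x ∧ 20 * κ < V.logHeight x :=
    max_lt_iff.1 (not_le.1 fun h ↦ hlarge ⟨hx.1, h⟩)
  have hxr := V.pow_ne_one_of_logHeight_pos hpos (r := r) (by omega)
  obtain ⟨ζ, hζ, hsum⟩ := hκ x hxr hx.2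
  obtain ⟨g, hg, hge⟩ := hgrid
    (fun i ↦ (log⁺ (V.abv i x) - log (V.abv i (ζ i * x - 1))) / V.logHeight x) (by
      simp only [← mul_div_assoc, ← sum_div]
      rw [le_div_iff₀ hpos]
      linarith)
  refine Set.mem_biUnion (fun i ↦ (mem_nthRootsFinset (by omega) 1).2 (hζ i))
    (Set.mem_biUnion hg (V.mem_approxClass ?_ hx.1 ?_ hpos hge))
  · exact fun i ↦ absoluteValue_eq_one_of_pow_eq_one (V.abv i) (by omega) (hζ i)
  · exact fun i h ↦ hxr (by rw [← one_pow r, ← h, mul_pow, hζ, one_mul])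

end SIntegerRing

/-! ### The `S`-unit equation -/

section NumberField

open NumberField IsDedekindDomain

variable {K : Type*} [Field K] [NumberField K] (S : Set (HeightOneSpectrum (𝓞 K)))

theorem finitePlace_mk_le_one_iff (v : HeightOneSpectrum (𝓞 K)) (x : K) :
    FinitePlace.mk v x ≤ 1 ↔ v.valuation K x ≤ 1 := by
  rw [FinitePlace.mk_apply, FinitePlace.norm_embedding']
  exact_mod_cast WithZeroMulInt.toNNReal_le_one_iff (HeightOneSpectrum.one_lt_absNorm_nnreal v)

theorem one_le_prod_infinitePlace_mul_prod_finitePlace [Fintype S] {x : K}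
    (hx : x ∈ S.integer K) (h0 : x ≠ 0) :
    1 ≤ (∏ w : InfinitePlace K, w x ^ w.mult) * ∏ v : S, FinitePlace.mk v.1 x := by
  classical
  have hfin : (Function.mulSupport fun v ↦ FinitePlace.mk v x).Finite :=
    (FinitePlace.hasFiniteMulSupport h0).preimage
      FinitePlace.equivHeightOneSpectrum.symm.injective.injOn
  have hprod : ∏ᶠ w : FinitePlace K, w x ≤ ∏ v : S, FinitePlace.mk v.1 x := by
    rw [prod_set_coe (f := fun v ↦ FinitePlace.mk v x) S]
    refine (finprod_comp_equiv FinitePlace.equivHeightOneSpectrum.symm).symm.trans_le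
      ((finprod_eq_prod_of_mulSupport_subset (s := S.toFinset ∪ hfin.toFinset) _ fun v hv ↦
        mem_coe.2 (mem_union_right _ (hfin.mem_toFinset.2 hv))).trans_le ?_)
    exact prod_le_prod_of_subset_of_le_one subset_union_left (fun _ _ ↦ apply_nonneg _ _)
      fun v _ hv ↦ (finitePlace_mk_le_one_iff v x).2 (hx v (mt Set.mem_toFinset.2 hv))
  rw [← prod_abs_eq_one h0]
  exact mul_le_mul_of_nonneg_left hprod (prod_nonneg fun w _ ↦ pow_nonneg (apply_nonneg w x) _)

theorem logHeight₁_eq_of_mem_sInteger [Fintype S] {x : K} (hx : x ∈ S.integer K) :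
    Height.logHeight₁ x = ∑ w : InfinitePlace K, w.mult * Real.posLog (w x) +
      ∑ v : S, Real.posLog (FinitePlace.mk v.1 x) := by
  rw [logHeight₁_eq, ← finsum_comp_equiv FinitePlace.equivHeightOneSpectrum.symm,
    sum_set_coe (f := fun v ↦ Real.posLog (FinitePlace.mk v x)) S]
  congr 1
  refine finsum_eq_sum_of_support_subset _ fun v hv ↦ not_imp_comm.1 (fun hS ↦ ?_) hv
  have hle := (finitePlace_mk_le_one_iff v x).2 (hx v (mt Set.mem_toFinset.2 hS))
  exact (Real.posLog_eq_zero_iff _).2 ((abs_of_nonneg (apply_nonneg _ x)).trans_le hle)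

/-- The `S`-integers of a number field, with the absolute values at the infinite places and in
`S`. -/
noncomputable def numberFieldSIntegerRing [Fintype S] : SIntegerRing K (InfinitePlace K ⊕ S) where
  ring := (S.integer K).toSubring
  abv := Sum.elim (fun w ↦ w.1) fun v ↦ (FinitePlace.mk v.1).1
  mult := Sum.elim InfinitePlace.mult 1
  one_le_prod x hx h0 := by
    rw [Fintype.prod_sum_type]
    simpa using! one_le_prod_infinitePlace_mul_prod_finitePlace S hx h0
  northcott B := (finite_setOfPred_logHeight₁_le K B).subset fun x hx ↦ by
    rw [Set.mem_ofPred, logHeight₁_eq_of_mem_sInteger S hx.1]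
    simpa using! hx.2

theorem finite_setOf_one_sub_pow_mem_sUnit {S : Set (HeightOneSpectrum (𝓞 K))}
    (hS : S.Finite) {r : ℕ} (hr : 3 ≤ r) {ω : K} (hω : IsPrimitiveRoot ω r) :
    {x ∈ S.integer K | ∃ u ∈ S.unit K, (u : K) = 1 - x ^ r}.Finite := by
  have := hS.fintype
  refine ((numberFieldSIntegerRing S).finite_setOf_prod_one_sub_pow_le_one hr hω).subset ?_
  rintro x ⟨hx, u, hu, hux⟩
  refine ⟨hx, ?_⟩
  have := (numberFieldSIntegerRing S).one_le_prod ↑u⁻¹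
    (fun v hv ↦ ((S.unit K).inv_mem hu v hv).le) u⁻¹.ne_zero
  simp only [Units.val_inv_eq_inv_val, map_inv₀, inv_pow, prod_inv_distrib, hux] at this
  exact (one_le_inv_iff₀.1 this).2

end NumberField

theorem subgroup_fg_of_fg_inf_ker {G A : Type*} [CommGroup G] [CommGroup A]
    [IsNoetherian ℤ (Additive A)] (f : G →* A) {N : Subgroup G} (hN : (N ⊓ f.ker).FG) : N.FG := by
  rw [Subgroup.fg_iff_add_fg, ← AddSubgroup.toIntSubmodule_toAddSubgroup N.toAddSubgroup,
    ← Submodule.fg_iff_addSubgroup_fg]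
  refine Submodule.fg_of_fg_map_of_fg_inf_ker (MonoidHom.toAdditive f).toIntLinearMap
    (IsNoetherian.noetherian _) ?_
  rw [Submodule.fg_iff_addSubgroup_fg]
  exact (Subgroup.fg_iff_add_fg _).1 hN

section SUnit

open IsDedekindDomain

variable {R : Type*} [CommRing R] [IsDedekindDomain R] (K : Type*) [Field K] [Algebra R K]
  [IsFractionRing R K]

theorem sUnit_empty : (∅ : Set (HeightOneSpectrum R)).unit K =
    (Units.map (algebraMap R K : R →* K)).range := by
  ext u
  refine ⟨fun hu ↦ ?_, ?_⟩
  · obtain ⟨x, hx⟩ := HeightOneSpectrum.mem_integers_of_valuation_le_one K (u : K) fun v ↦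
      (hu v (Set.notMem_empty v)).le
    obtain ⟨y, hy⟩ := HeightOneSpectrum.mem_integers_of_valuation_le_one K (↑u⁻¹ : K) fun v ↦
      (inv_mem hu v (Set.notMem_empty v)).le
    have hxy : x * y = 1 := IsFractionRing.injective R K (by simp [hx, hy])
    exact ⟨⟨x, y, hxy, mul_comm x y ▸ hxy⟩, Units.ext hx⟩
  · rintro ⟨x, rfl⟩ v -
    rw [← v.valuationOfNeZero_eq, v.valuation_of_unit_eq, WithZero.coe_one]

/-- Dirichlet's `S`-unit theorem, given finite generation of the unit group. -/
theorem sUnit_fg_of_finite [Monoid.FG Rˣ] {S : Set (HeightOneSpectrum R)} (hS : S.Finite) :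
    (S.unit K).FG := by
  have := hS.to_subtype
  have hunits : ((∅ : Set (HeightOneSpectrum R)).unit K).FG := by
    rw [sUnit_empty, ← Group.fg_iff_subgroup_fg]
    have : Group.FG Rˣ := Group.fg_iff_monoid_fg.2 ‹_›
    infer_instance
  suffices S.unit K ⊓ (MonoidHom.pi fun v : S ↦ v.1.valuationOfNeZero).ker =
      (∅ : Set (HeightOneSpectrum R)).unit K from subgroup_fg_of_fg_inf_ker _ (this ▸ hunits)
  ext u
  have hval (v : HeightOneSpectrum R) : v.valuationOfNeZero u = 1 ↔ v.valuation K (u : K) = 1 := by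
    rw [← v.valuationOfNeZero_eq, ← WithZero.coe_one, WithZero.coe_inj]
  refine ⟨fun h v _ ↦ ?_, fun h ↦ ⟨fun v _ ↦ h v (Set.notMem_empty v), ?_⟩⟩
  · by_cases hv : v ∈ S
    · exact (hval v).1 (congr_fun h.2 ⟨v, hv⟩)
    · exact h.1 v hv
  · exact funext fun v ↦ (hval v).2 (h v (Set.notMem_empty _))

theorem exists_finite_forall_mem_sUnit {G : Type*} [Group G] {Γ : Subgroup G} (hΓ : Γ.FG)
    (φ : G →* Kˣ) :
    ∃ S : Set (HeightOneSpectrum R), S.Finite ∧ ∀ g ∈ Γ, φ g ∈ S.unit K := by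
  obtain ⟨T, rfl⟩ := hΓ
  set S : Set (HeightOneSpectrum R) := ⋃ g ∈ T, {v | v.valuation K (φ g : K) ≠ 1}
  have hle : Subgroup.closure T ≤ (S.unit K).comap φ := by
    rw [Subgroup.closure_le]
    intro g hg v hv
    by_contra h
    exact hv (Set.mem_biUnion hg h)
  refine ⟨S, T.finite_toSet.biUnion fun g _ ↦ ?_, fun g hg ↦ hle hg⟩
  refine ((HeightOneSpectrum.Support.finite R (φ g : K)).union
    (HeightOneSpectrum.Support.finite R (φ g : K)⁻¹)).subset fun v hv ↦ ?_
  refine (lt_or_gt_of_ne hv).symm.imp id fun h ↦ ?_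
  simpa [HeightOneSpectrum.Support] using (one_lt_inv₀ (by simp [zero_lt_iff])).2 h

section

variable {K} {S : Set (HeightOneSpectrum R)}

theorem mem_sInteger_of_pow_mem {x : K} {n : ℕ} (hn : n ≠ 0) (hx : x ^ n ∈ S.integer K) :
    x ∈ S.integer K := fun v hv ↦
  (pow_le_one_iff hn).1 (map_pow (v.valuation K) x n ▸ hx v hv)

theorem mem_sUnit_of_pow_mem {u : Kˣ} {n : ℕ} (hn : n ≠ 0) (hu : u ^ n ∈ S.unit K) :
    u ∈ S.unit K := fun v hv ↦
  (pow_eq_one_iff_left hn).1 (map_pow (v.valuation K) (u : K) n ▸ hu v hv)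

theorem exists_mem_sUnit_eq_of_mul {x y : K} (hx : x ∈ S.integer K) (hy : y ∈ S.integer K)
    {u : Kˣ} (hu : u ∈ S.unit K) (hxy : x * y = u) : ∃ u' ∈ S.unit K, (u' : K) = x := by
  refine ⟨Units.mk0 x (left_ne_zero_of_mul (hxy ▸ u.ne_zero)), fun v hv ↦ ?_, rfl⟩
  refine eq_one_of_one_le_mul_left (hx v hv) (hy v hv) (Eq.ge ?_)
  rw [← map_mul, Units.val_mk0, hxy, hu v hv]

end

end SUnit

section UnitEquation

open NumberField IsDedekindDomain

universe u

variable {K : Type u} [Field K] [NumberField K] {Γ : Subgroup Kˣ}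

theorem exists_numberField_forall_mem_exists_pow_eq (hΓ : Γ.FG) {n : ℕ} (hn : n ≠ 0) :
    ∃ (L : Type u) (_ : Field L) (_ : NumberField L) (_ : Algebra K L),
      (∃ ω : L, IsPrimitiveRoot ω n) ∧ ∀ u ∈ Γ, ∃ t : Lˣ, t ^ n = Units.map (algebraMap K L) u := by
  obtain ⟨T, rfl⟩ := hΓ
  set f : K[X] := cyclotomic n K * ∏ u ∈ T, (X ^ n - C (u : K))
  have hf : f ≠ 0 := mul_ne_zero (cyclotomic_ne_zero n K)
    (prod_ne_zero_iff.2 fun u _ ↦ X_pow_sub_C_ne_zero hn.bot_lt _)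
  have hroot {g : K[X]} (hg : g ∣ f) (hdeg : g.degree ≠ 0) :
      ∃ t : f.SplittingField, (g.map (algebraMap K _)).IsRoot t :=
    ((SplittingField.splits f).of_dvd ((Polynomial.map_ne_zero_iff (algebraMap K _).injective).2 hf)
      (Polynomial.map_dvd _ hg)).exists_eval_eq_zero (by rwa [degree_map])
  have : NumberField f.SplittingField := NumberField.of_module_finite K _
  refine ⟨f.SplittingField, inferInstance, this, inferInstance, ?_, ?_⟩
  · obtain ⟨ω, hω⟩ := hroot (dvd_mul_right _ _) (by
      rw [degree_cyclotomic]
      exact_mod_cast (Nat.totient_pos.2 hn.bot_lt).ne')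
    have : NeZero (n : f.SplittingField) := ⟨Nat.cast_ne_zero.2 hn⟩
    exact ⟨ω, isRoot_cyclotomic_iff.1 (map_cyclotomic n (algebraMap K f.SplittingField) ▸ hω)⟩
  · suffices Subgroup.closure (T : Set Kˣ) ≤ (powMonoidHom n).range.comap
      (Units.map (algebraMap K f.SplittingField : K →* f.SplittingField)) from
        fun u hu ↦ this hu
    rw [Subgroup.closure_le]
    intro u hu
    obtain ⟨t, ht⟩ := hroot ((dvd_prod_of_mem _ hu).mul_left _) (by
      rw [degree_X_pow_sub_C hn.bot_lt]
      exact_mod_cast hn)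
    have htn : t ^ n = algebraMap K _ u := by simpa [IsRoot, sub_eq_zero] using ht
    have ht0 : t ≠ 0 := by
      rintro rfl
      rw [zero_pow hn] at htn
      exact u.ne_zero (by simpa using htn.symm)
    exact ⟨Units.mk0 t ht0, Units.ext htn⟩

theorem finite_setOf_add_eq_one (hΓ : Γ.FG) : {u ∈ Γ | ∃ v ∈ Γ, (u + v : K) = 1}.Finite := by
  obtain ⟨L, _, _, _, ⟨ω, hω⟩, hroot⟩ :=
    exists_numberField_forall_mem_exists_pow_eq hΓ three_ne_zero
  set φ : Kˣ →* Lˣ := Units.map (algebraMap K L)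
  have hφ : Function.Injective φ := Units.map_injective (algebraMap K L).injective
  obtain ⟨S, hS, hΓS⟩ := exists_finite_forall_mem_sUnit (R := 𝓞 L) L hΓ φ
  refine (((finite_setOf_one_sub_pow_mem_sUnit hS le_rfl hω).image (· ^ 3)).preimage
    (f := fun u ↦ (φ u : L)) (Units.val_injective.comp hφ).injOn).subset ?_
  rintro u ⟨hu, v, hv, huv⟩
  obtain ⟨t, ht⟩ := hroot u hu
  have ht' : (t : L) ^ 3 = algebraMap K L u := congrArg Units.val ht
  have htS : t ∈ S.unit L := mem_sUnit_of_pow_mem three_ne_zero (ht ▸ hΓS u hu)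
  refine ⟨t, ⟨fun v hv ↦ (htS v hv).le, φ v, hΓS v hv, ?_⟩, ht'⟩
  rw [ht', ← map_one (algebraMap K L), ← huv, map_add, add_sub_cancel_left]
  rfl

theorem finite_setOf_sq_eq_one_add {S : Set (HeightOneSpectrum (𝓞 K))} (hS : S.Finite) {two : Kˣ}
    (htwo : two ∈ S.unit K) (h2 : (two : K) = 2) :
    {u ∈ S.unit K | ∃ s : K, s ^ 2 = 1 + u}.Finite := by
  refine (((finite_setOf_add_eq_one (sUnit_fg_of_finite K hS)).image
    fun p : Kˣ ↦ (2 * (p : K) - 1) ^ 2 - 1).preimage (Units.val_injective.injOn)).subset ?_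
  rintro u ⟨hu, s, hs⟩
  have hsS : s ∈ S.integer K := mem_sInteger_of_pow_mem two_ne_zero
    (hs ▸ add_mem (one_mem _) fun v hv ↦ (hu v hv).le)
  have hplus : 1 + s ∈ S.integer K := add_mem (one_mem _) hsS
  have hminus : 1 - s ∈ S.integer K := sub_mem (one_mem _) hsS
  obtain ⟨p, hpS, hp⟩ := exists_mem_sUnit_eq_of_mul hplus (neg_mem hminus) hu
    (by linear_combination hs)
  obtain ⟨q, hqS, hq⟩ := exists_mem_sUnit_eq_of_mul hminus (neg_mem hplus) hu
    (by linear_combination hs)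
  refine ⟨p / two, ⟨div_mem hpS htwo, q / two, div_mem hqS htwo, ?_⟩, ?_⟩
  · simp only [Units.val_div_eq_div_val, hp, hq, h2]
    ring
  · simp only [Units.val_div_eq_div_val, hp, h2, mul_div_cancel₀ _ (two_ne_zero' K)]
    linear_combination hs

theorem finite_setOf_one_add_eq_mul_sq (hΓ : Γ.FG) :
    {u ∈ Γ | ∃ w ∈ Γ, ∃ z : K, (1 + u : K) = w * z ^ 2}.Finite := by
  obtain ⟨L, _, _, _, -, hroot⟩ := exists_numberField_forall_mem_exists_pow_eq hΓ two_ne_zero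
  set φ : Kˣ →* Lˣ := Units.map (algebraMap K L)
  set two : Kˣ := Units.mk0 2 two_ne_zero
  obtain ⟨S, hS, hΓS⟩ := exists_finite_forall_mem_sUnit (R := 𝓞 L) L
    (hΓ.sup (Q := Subgroup.closure {two}) ⟨{two}, by simp⟩) φ
  have htwo : φ two ∈ S.unit L :=
    hΓS two (Subgroup.mem_sup_right (Subgroup.mem_closure_singleton_self two))
  refine ((finite_setOf_sq_eq_one_add hS htwo (map_ofNat (algebraMap K L) 2)).preimage
    (Units.map_injective (algebraMap K L).injective).injOn).subset ?_
  rintro u ⟨hu, w, hw, z, huwz⟩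
  obtain ⟨t, ht⟩ := hroot w hw
  refine ⟨hΓS u (Subgroup.mem_sup_left hu), t * algebraMap K L z, ?_⟩
  have ht' : (t : L) ^ 2 = algebraMap K L w := congrArg Units.val ht
  rw [mul_pow, ht', ← map_pow, ← map_mul, ← huwz, map_add, map_one]
  rfl

end UnitEquation

/-! ### Sums of two `S`-units -/

section SUnitSums

variable {S : Finset ℕ} {x : ℤ}

/-- The group of rational `S`-units, presented by its generators `-1` and the elements of `S`, which
makes it finitely generated by construction. -/
def sUnitSubgroup (S : Finset ℕ) : Subgroup ℚˣ :=
  Subgroup.closure {u | (u : ℚ) = -1 ∨ ∃ p ∈ S, (u : ℚ) = p}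

theorem sUnitSubgroup_fg (S : Finset ℕ) : (sUnitSubgroup S).FG := by
  refine (Subgroup.fg_iff _).mpr ⟨_, rfl, ?_⟩
  refine (((S.finite_toSet.image (Nat.cast : ℕ → ℚ)).insert (-1)).preimage
    Units.val_injective.injOn).subset ?_
  rintro u (hu | ⟨p, hp, hu⟩)
  · exact Or.inl hu
  · exact Or.inr ⟨p, hp, hu.symm⟩

theorem exists_mem_sUnitSubgroup_eq_natCast {n : ℕ} (hn : IsSUnit S n) :
    ∃ u ∈ sUnitSubgroup S, (u : ℚ) = n := by
  induction n using induction_on_primes with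
  | zero => exact absurd rfl hn.1
  | one => exact ⟨1, one_mem _, by simp⟩
  | prime_mul p m hp ih =>
    have hm : IsSUnit S m := by
      refine ⟨fun hm ↦ hn.1 (by simp [hm]), fun q hq hqm ↦ hn.2 q hq ?_⟩
      exact hqm.trans (by simp)
    obtain ⟨u, hu, hum⟩ := ih hm
    have hpS : p ∈ S := hn.2 p hp (by simp)
    refine ⟨Units.mk0 (p : ℚ) (by exact_mod_cast hp.ne_zero) * u,
      mul_mem (Subgroup.subset_closure (Or.inr ⟨p, hpS, rfl⟩)) hu, ?_⟩
    simp [hum]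

theorem IsSUnit.exists_mem_sUnitSubgroup (hx : IsSUnit S x) :
    ∃ u ∈ sUnitSubgroup S, (u : ℚ) = x := by
  have hnat : IsSUnit S x.natAbs :=
    ⟨by simpa using hx.1, fun p hp hpx ↦ hx.2 p hp (Int.dvd_natAbs.mp hpx)⟩
  obtain ⟨u, hu, hux⟩ := exists_mem_sUnitSubgroup_eq_natCast hnat
  obtain hxn | hxn := x.natAbs_eq
  · exact ⟨u, hu, by rw [hux, hxn]; simp⟩
  · refine ⟨-1 * u, mul_mem (Subgroup.subset_closure (Or.inl (by simp))) hu, ?_⟩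
    rw [Units.val_mul, hux, hxn]
    simp

theorem finite_setOf_div_sUnit (S : Finset ℕ) :
    {q : ℚ | ∃ x y w z : ℤ, IsSUnit S x ∧ IsSUnit S y ∧ IsSUnit S w ∧ x + y = w * z ^ 2 ∧
      q = x / y}.Finite := by
  refine ((finite_setOf_one_add_eq_mul_sq (sUnitSubgroup_fg S)).image Units.val).subset ?_
  rintro q ⟨x, y, w, z, hx, hy, hw, hsum, rfl⟩
  obtain ⟨u, hu, hux⟩ := hx.exists_mem_sUnitSubgroup
  obtain ⟨v, hv, hvy⟩ := hy.exists_mem_sUnitSubgroup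
  obtain ⟨t, ht, htw⟩ := hw.exists_mem_sUnitSubgroup
  have hsum' : (x : ℚ) + y = w * z ^ 2 := mod_cast hsum
  have hy0 : (y : ℚ) ≠ 0 := mod_cast hy.1
  refine ⟨u / v, ⟨div_mem hu hv, t / v, div_mem ht hv, z, ?_⟩, ?_⟩
  · rw [Units.val_div_eq_div_val, Units.val_div_eq_div_val, hux, hvy, htw]
    field_simp
    linear_combination hsum'
  · rw [Units.val_div_eq_div_val, hux, hvy]

theorem finite_setOf_div_mem_gcd_le {Q : Set ℚ} (hQ : Q.Finite) (a : ℕ) :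
    {p : ℤ × ℤ | p.2 ≠ 0 ∧ (p.1 / p.2 : ℚ) ∈ Q ∧ Int.gcd p.1 p.2 ≤ a}.Finite := by
  refine ((hQ.prod (Set.finite_Icc (-a : ℤ) a)).image
    fun s ↦ (s.2 * s.1.num, s.2 * (s.1.den : ℤ))).subset ?_
  rintro ⟨x, y⟩ ⟨hy, hxy, hgcd⟩
  obtain ⟨c, hx, hy'⟩ := Rat.exists_eq_mul_div_num_and_eq_mul_div_den x hy
  have hc : c ∣ Int.gcd x y := Int.dvd_coe_gcd (Dvd.intro _ hx.symm) (Dvd.intro _ hy'.symm)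
  have hgcd_pos : (0 : ℤ) < Int.gcd x y := mod_cast Int.gcd_pos_of_ne_zero_right x hy
  have hca : |c| ≤ a := (Int.le_of_dvd hgcd_pos ((abs_dvd _ _).mpr hc)).trans (mod_cast hgcd)
  exact ⟨(x / y, c), ⟨hxy, abs_le.mp hca⟩, Prod.ext hx.symm hy'.symm⟩

end SUnitSums

theorem finitely_many_sums_of_S_units_square
    (S : Finset ℕ) (hS : ∀ p ∈ S, p.Prime) (a : ℕ) (ha : 0 < a) :
    {t : ℤ × ℤ × ℤ | IsSUnit S t.1 ∧ IsSUnit S t.2.1 ∧ IsSUnit S t.2.2 ∧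
      Int.gcd t.1 t.2.1 ≤ a ∧
      ∃ z : ℤ, z ≠ 0 ∧ t.1 + t.2.1 = t.2.2 * z ^ 2}.Finite := by
  have hpairs := finite_setOf_div_mem_gcd_le (finite_setOf_div_sUnit S) a
  have htriples := hpairs.biUnion fun p _ ↦
    (p.1 + p.2).divisors.finite_toSet.image fun w ↦ (p.1, p.2, w)
  refine htriples.subset ?_
  rintro ⟨x, y, w⟩ ⟨hx, hy, hw, hgcd, z, hz, hsum⟩
  have hsum_ne : x + y ≠ 0 := hsum ▸ mul_ne_zero hw.1 (pow_ne_zero 2 hz)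
  exact Set.mem_biUnion (x := (x, y)) ⟨hy.1, ⟨x, y, w, z, hx, hy, hw, hsum, rfl⟩, hgcd⟩
    ⟨w, Int.mem_divisors.mpr ⟨Dvd.intro _ hsum.symm, hsum_ne⟩, rfl⟩
end

section
/- Let S be a finite set of prime numbers and let a be a positive integer. There exists a constant C, depending only on S and a, with the following property: if x, y, w are S-units with gcd(x, y) ≤ a, and n ≥ 2 and z are integers with |z| > 1 satisfying x + y = w·z^n, then n ≤ C. -/
/-!
Let `|x| ≤ |y|`, and let `p ∈ S` maximize the power `p ^ t` exactly dividing `y`, so that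
`|y| ≤ (p ^ t) ^ |S|`. Stripped of their powers of `p`, the squares of `x + y` and `x` are numbers
`A = ζ ^ n * ∏ l ^ u l` and `B = ∏ l ^ v l`, which are congruent modulo `p ^ m` with
`p ^ t / p ^ m` at most `gcd(x, y)`, and distinct unless `y = -2 x`. If `|y|` is large, then
`(p ^ m) ^ (4 * |S|)` exceeds `H = 4 * y ^ 2`, a bound for both numbers. This is impossible for
large `n`, so `|y|` is bounded, and `n` is too because `2 ^ n ≤ |x + y| ≤ 2 * |y|`.

Instead of a lower bound for `p`-adic linear forms in logarithms, the impossibility is proved with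
an interpolation determinant. Put `Λ = A / B`. Simultaneous Dirichlet approximation to the
exponents `(u l - v l) / n` gives a number `β = ζ ^ Q * ∏ l ^ F l`, congruent to `1` modulo a power
of `p` and with `Q / n` times the exponents of `Λ` approximately. Hence `β ^ b / Λ ^ ⌊Q b / n⌋` is,
up to a constant factor, an integer `g b` of moderate size when `Q b mod n` is small. Since `Λ ≡ 1`
modulo `p ^ m`, it is `p`-adically close to a multiple of `β ^ b`, which is nearly polynomial in
`b`; so the determinants with rows `b.choose i` and `g b * b.choose i` are divisible by a high
power of `p`. They do not all vanish, because `g (b + 1) = β * g b` off the jumps of the floor, and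
so their archimedean size bounds `p ^ m`.
-/

open Finset

/-! ### Interpolation determinants -/

theorem one_add_pow_mul_choose {R : Type*} [CommSemiring R] (y : R) {b M : ℕ} (hM : b < M) (j : ℕ) :
    (1 + y) ^ b * (b.choose j : R) =
      ∑ k ∈ range M, (1 + y) ^ j * y ^ (k - j) * k.choose j * b.choose k := by
  have vanish_of_lt {k : ℕ} (hk : k < j) :
      (1 + y) ^ j * y ^ (k - j) * k.choose j * b.choose k = 0 := by
    rw [Nat.choose_eq_zero_of_lt hk, Nat.cast_zero, mul_zero, zero_mul]
  have vanish_of_gt {k : ℕ} (hk : b < k) :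
      (1 + y) ^ j * y ^ (k - j) * k.choose j * b.choose k = 0 := by
    rw [Nat.choose_eq_zero_of_lt hk, Nat.cast_zero, mul_zero]
  rcases lt_or_ge b j with hbj | hjb
  · rw [Nat.choose_eq_zero_of_lt hbj, Nat.cast_zero, mul_zero,
      sum_eq_zero fun k _ ↦ (lt_or_ge k j).elim vanish_of_lt fun h ↦ vanish_of_gt (hbj.trans_le h)]
  obtain ⟨d, rfl⟩ := Nat.exists_eq_add_of_le hjb
  calc (1 + y) ^ (j + d) * ((j + d).choose j : R)
      = ∑ i ∈ range (d + 1), (1 + y) ^ j * y ^ i * ((j + d).choose j * d.choose i : ℕ) := by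
        rw [pow_add, mul_assoc, add_comm 1 y, add_pow y 1 d, sum_mul, mul_sum]
        exact sum_congr rfl fun i _ ↦ by push_cast; ring
    _ = ∑ i ∈ range (d + 1), (1 + y) ^ j * y ^ (j + i - j) * (j + i).choose j *
          (j + d).choose (j + i) := by
        refine sum_congr rfl fun i _ ↦ ?_
        have := Nat.choose_mul (n := j + d) (Nat.le_add_right j i)
        rw [add_tsub_cancel_left, add_tsub_cancel_left] at this
        rw [← this, add_tsub_cancel_left]
        push_cast
        ring
    _ = ∑ k ∈ Ico j (j + d + 1), (1 + y) ^ j * y ^ (k - j) * k.choose j * (j + d).choose k := by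
        rw [sum_Ico_eq_sum_range, add_assoc, add_tsub_cancel_left]
    _ = _ := sum_subset (fun k hk ↦ by grind) fun k _ hk ↦
        (lt_or_ge k j).elim vanish_of_lt fun h ↦ vanish_of_gt (by grind)

theorem pow_dvd_one_add_pow_mul_choose_sub_sum {R : Type*} [CommRing R] (y : R) (b j M : ℕ) :
    y ^ (M - j) ∣ (1 + y) ^ b * (b.choose j : R) -
      ∑ k ∈ range M, (1 + y) ^ j * y ^ (k - j) * k.choose j * b.choose k := by
  rw [one_add_pow_mul_choose y (lt_max_of_lt_right b.lt_succ_self : b < max M b.succ),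
    ← sum_range_add_sum_Ico _ (le_max_left M _), add_sub_cancel_left]
  refine dvd_sum fun k hk ↦ ?_
  have hpow := pow_dvd_pow y (Nat.sub_le_sub_right (mem_Ico.1 hk).1 j)
  exact ((hpow.mul_left _).mul_right _).mul_right _

open Matrix in
theorem pow_card_dvd_det_fromRows {R m n : Type*} [CommRing R] [Fintype m] [Fintype n]
    [DecidableEq m] [DecidableEq n] {d : R} (A₁ : Matrix m (m ⊕ n) R) (A₂ : Matrix n (m ⊕ n) R)
    (C : Matrix n m R) (h : ∀ i j, d ∣ (A₂ - C * A₁) i j) :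
    d ^ Fintype.card n ∣ (fromRows A₁ A₂).det := by
  choose E hE using h
  have hA₂ : A₂ = C * A₁ + d • (of E) := by
    rw [eq_add_of_sub_eq' (Matrix.ext hE : A₂ - C * A₁ = d • of E)]
  have hfactor : fromRows A₁ A₂ = fromBlocks 1 0 C (d • 1) * fromRows A₁ (of E) := by
    rw [fromBlocks_mul_fromRows, Matrix.one_mul, Matrix.zero_mul, add_zero, smul_mul,
      Matrix.one_mul, hA₂]
  rw [hfactor, det_mul, det_fromBlocks_zero₁₂, det_one, one_mul, det_smul, det_one, mul_one]
  exact dvd_mul_right _ _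

theorem exists_submatrix_det_ne_zero {F m n : Type*} [Field F] [Fintype m] [DecidableEq m]
    [Finite n] {A : Matrix m n F} (hA : LinearIndependent F A.row) :
    ∃ e : m → n, (A.submatrix id e).det ≠ 0 := by
  cases nonempty_fintype n
  have hspan : Submodule.span F (Set.range A.col) = ⊤ := by
    apply Submodule.eq_top_of_finrank_eq
    rw [← Matrix.rank_eq_finrank_span_cols, hA.rank_matrix, Module.finrank_fintype_fun_eq_card]
  obtain ⟨κ, a, ha, hspan_a, hli⟩ := exists_linearIndependent' F A.col
  cases @nonempty_fintype κ (.of_injective a ha)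
  let basis := Module.Basis.mk hli (hspan_a.trans hspan).ge
  let e : m ≃ κ := Fintype.equivOfCardEq <| by
    rw [← Module.finrank_eq_card_basis basis, Module.finrank_fintype_fun_eq_card]
  refine ⟨a ∘ e, IsUnit.ne_zero ((Matrix.isUnit_iff_isUnit_det _).1 ?_)⟩
  exact Matrix.linearIndependent_cols_iff_isUnit.1 (hli.comp e e.injective)

open Polynomial Nat in
/-- The polynomials `X (X - 1) ⋯ (X - k + 1) / k!`, which interpolate `b ↦ b.choose k`. -/
noncomputable def binomialPolynomial (F : Type*) [Field F] [CharZero F] :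
    Polynomial.Sequence F where
  elems' k := C (k ! : F)⁻¹ * descPochhammer F k
  degree_eq' k := by
    rw [degree_C_mul (inv_ne_zero (mod_cast k.factorial_ne_zero)),
      degree_eq_natDegree (monic_descPochhammer F k).ne_zero, descPochhammer_natDegree]

theorem eval_binomialPolynomial {F : Type*} [Field F] [CharZero F] (k b : ℕ) :
    (binomialPolynomial F k).eval (b : F) = b.choose k := by
  have hk : (k.factorial : F) ≠ 0 := mod_cast k.factorial_ne_zero
  change (Polynomial.C (k.factorial : F)⁻¹ * descPochhammer F k).eval (b : F) = _
  rw [Polynomial.eval_C_mul, descPochhammer_eval_eq_descFactorial,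
    Nat.descFactorial_eq_factorial_mul_choose, Nat.cast_mul, inv_mul_cancel_left₀ hk]

section Shift

open Polynomial

variable {R : Type*} [CommRing R] [IsDomain R]

theorem eq_zero_or_eq_zero_of_taylor_mul_eq {P Q : R[X]} {β : R} (hβ : β ≠ 1)
    (h : taylor 1 P * Q = C β * (P * taylor 1 Q)) : P = 0 ∨ Q = 0 := by
  by_contra! ⟨hP, hQ⟩
  have hlead := congrArg leadingCoeff h
  simp only [leadingCoeff_mul, leadingCoeff_C, leadingCoeff_taylor] at hlead
  have hPQ : P.leadingCoeff * Q.leadingCoeff ≠ 0 :=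
    mul_ne_zero (leadingCoeff_ne_zero.2 hP) (leadingCoeff_ne_zero.2 hQ)
  exact hβ (mul_right_cancel₀ hPQ (by rw [← hlead, one_mul]))

theorem eq_zero_of_degree_lt_of_eval_natCast_eq_zero [CharZero R] {P : R[X]} (B : Finset ℕ)
    (hdeg : P.degree < #B) (h : ∀ b ∈ B, P.eval (b : R) = 0) : P = 0 := by
  refine eq_zero_of_degree_lt_of_eval_finset_eq_zero (B.map Nat.castEmbedding) ?_ ?_
  · rwa [card_map]
  · exact forall_mem_map.2 h

theorem degree_mul_lt_of_degree_lt {P Q : R[X]} {M N : ℕ} (hP : P.degree < M) (hQ : Q.degree < N) :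
    (P * Q).degree < (M + N : ℕ) := by
  rcases eq_or_ne P 0 with rfl | hP₀
  · rw [zero_mul, degree_zero]
    exact WithBot.bot_lt_coe _
  · rw [degree_mul, Nat.cast_add]
    exact WithBot.add_lt_add_of_le_of_lt (degree_ne_bot.2 hP₀) hP.le hQ

theorem eq_zero_of_eval_add_mul_eval_eq_zero [CharZero R] {P Q : R[X]} {M N : ℕ}
    (hP : P.degree < M) (hQ : Q.degree < N) {B good : Finset ℕ} {g : ℕ → R} {β : R} (hβ : β ≠ 1)
    (hPQ : ∀ b ∈ B, P.eval (b : R) + g b * Q.eval (b : R) = 0) (hg : ∀ b ∈ B, g b ≠ 0)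
    (hgoodB : good ⊆ B) (hgood : ∀ b ∈ good, b + 1 ∈ B ∧ g (b + 1) = β * g b)
    (hcard : M + N ≤ #good) : P = 0 ∧ Q = 0 := by
  have hB : #good ≤ #B := card_le_card hgoodB
  have hshift : taylor 1 P * Q = C β * (P * taylor 1 Q) := by
    refine sub_eq_zero.1 (eq_zero_of_degree_lt_of_eval_natCast_eq_zero good ?_ fun b hb ↦ ?_)
    · refine lt_of_lt_of_le ?_ (Nat.cast_le.2 hcard)
      refine (degree_sub_le _ _).trans_lt (max_lt ?_ ?_)
      · exact degree_mul_lt_of_degree_lt (by rwa [degree_taylor]) hQ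
      · rw [← smul_eq_C_mul]
        exact (degree_smul_le _ _).trans_lt
          (degree_mul_lt_of_degree_lt hP (by rwa [degree_taylor]))
    · have hb₀ := hPQ b (hgoodB hb)
      have hb₁ := hPQ (b + 1) (hgood b hb).1
      rw [(hgood b hb).2, Nat.cast_succ] at hb₁
      simp only [eval_sub, eval_mul, eval_C, taylor_eval]
      linear_combination Q.eval (b : R) * hb₁ - β * Q.eval (b + 1 : R) * hb₀
  rcases eq_zero_or_eq_zero_of_taylor_mul_eq hβ hshift with rfl | rfl
  · refine ⟨rfl, eq_zero_of_degree_lt_of_eval_natCast_eq_zero B ?_ fun b hb ↦ ?_⟩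
    · exact hQ.trans_le (Nat.cast_le.2 (by lia))
    · simpa only [eval_zero, zero_add, mul_eq_zero, hg b hb, false_or] using hPQ b hb
  · refine ⟨eq_zero_of_degree_lt_of_eval_natCast_eq_zero B ?_ fun b hb ↦ ?_, rfl⟩
    · exact hP.trans_le (Nat.cast_le.2 (by lia))
    · simpa only [eval_zero, mul_zero, add_zero] using hPQ b hb

end Shift

section InterpolationDeterminant

open Matrix

/-- The values at the points `e j` of the functions `b ↦ b.choose i` for `i < M`, followed by those
of the functions `b ↦ g b * b.choose i` for `i < N`: an interpolation matrix whose rows measure how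
far `g` is from being a quotient of polynomials. -/
def interpolationMatrix {R κ : Type*} [Semiring R] (M N : ℕ) (g : ℕ → R) (e : κ → ℕ) :
    Matrix (Fin M ⊕ Fin N) κ R :=
  fromRows (of fun i j ↦ ((e j).choose i : R)) (of fun i j ↦ g (e j) * (e j).choose i)

theorem linearIndependent_row_interpolationMatrix {F : Type*} [Field F] [CharZero F] {M N : ℕ}
    {B good : Finset ℕ} {g : ℕ → F} {β : F} (hβ : β ≠ 1) (hg : ∀ b ∈ B, g b ≠ 0)
    (hgoodB : good ⊆ B) (hgood : ∀ b ∈ good, b + 1 ∈ B ∧ g (b + 1) = β * g b)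
    (hcard : M + N ≤ #good) :
    LinearIndependent F (interpolationMatrix M N g ((↑) : B → ℕ)).row := by
  have hbinom (k : ℕ) : LinearIndependent F fun i : Fin k ↦ binomialPolynomial F i :=
    (binomialPolynomial F).linearIndependent.comp _ Fin.val_injective
  have hdegree {k : ℕ} (c : Fin k → F) : (∑ i, c i • binomialPolynomial F i).degree < k :=
    Polynomial.mem_degreeLT.1 <| Submodule.sum_mem _ fun i _ ↦ Submodule.smul_mem _ _ <|
      Polynomial.mem_degreeLT.2 <| by
        rw [Polynomial.Sequence.degree_eq]; exact Nat.cast_lt.2 i.2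
  rw [Fintype.linearIndependent_iff]
  intro c hc
  have heval (b : ℕ) (hb : b ∈ B) :
      (∑ i, c (.inl i) • binomialPolynomial F i).eval (b : F) +
        g b * (∑ i, c (.inr i) • binomialPolynomial F i).eval (b : F) = 0 := by
    have hrow := congrFun hc ⟨b, hb⟩
    rw [Fintype.sum_sum_type, Pi.add_apply, Finset.sum_apply, Finset.sum_apply] at hrow
    simp only [Polynomial.eval_finsetSum, Polynomial.eval_smul, eval_binomialPolynomial,
      smul_eq_mul, mul_sum, mul_left_comm (g b)]
    exact hrow
  obtain ⟨hP, hQ⟩ := eq_zero_of_eval_add_mul_eval_eq_zero (hdegree _) (hdegree _) hβ heval hg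
    hgoodB hgood hcard
  rintro (i | i)
  · exact Fintype.linearIndependent_iff.1 (hbinom M) _ hP i
  · exact Fintype.linearIndependent_iff.1 (hbinom N) _ hQ i

theorem pow_dvd_det_interpolationMatrix {R : Type*} [CommRing R] {M N : ℕ} {g : ℕ → R}
    {e : Fin (M + N) ⊕ Fin N → ℕ} {d D β : R} (hβ : d ∣ (β - 1) ^ M)
    (hg : ∀ j, d ∣ g (e j) - D * β ^ e j) :
    d ^ N ∣ (interpolationMatrix (M + N) N g e).det := by
  let C : Matrix (Fin N) (Fin (M + N)) R :=
    of fun i k ↦ D * (β ^ (i : ℕ) * (β - 1) ^ (k - i : ℕ) * (k : ℕ).choose i)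
  have := pow_card_dvd_det_fromRows (d := d) (of fun i j ↦ ((e j).choose i : R))
    (of fun i j ↦ g (e j) * (e j).choose i) C fun i j ↦ ?_
  · rwa [Fintype.card_fin] at this
  have hgi := (hg j).mul_right ((e j).choose i : R)
  have htail := pow_dvd_one_add_pow_mul_choose_sub_sum (β - 1) (e j) i (M + N)
  rw [add_sub_cancel, ← Fin.sum_univ_eq_sum_range
    fun k ↦ β ^ (i : ℕ) * (β - 1) ^ (k - i : ℕ) * k.choose i * (e j).choose k] at htail
  replace htail := ((hβ.trans (pow_dvd_pow _ (by lia))).trans htail).mul_left D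
  convert dvd_add hgi htail using 1
  simp only [Matrix.sub_apply, mul_apply, of_apply, C, mul_sub, mul_sum, mul_assoc]
  ring

theorem abs_det_interpolationMatrix_le {M N X G : ℕ} {g : ℕ → ℤ} {e : Fin M ⊕ Fin N → ℕ}
    (he : ∀ j, e j ≤ X) (hg : ∀ j, |g (e j)| ≤ G) (hG : 1 ≤ G) :
    |(interpolationMatrix M N g e).det| ≤ ((M + N).factorial * (2 ^ X * G) ^ (M + N) : ℕ) := by
  have hchoose (i : ℕ) (j) : ((e j).choose i : ℤ) ≤ 2 ^ X := mod_cast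
    (Nat.choose_le_two_pow _ _).trans (Nat.pow_le_pow_right two_pos (he j))
  have hentry (i j) : |interpolationMatrix M N g e i j| ≤ 2 ^ X * G := by
    rcases i with i | i
    · exact (Nat.abs_cast _).trans_le
        ((hchoose i j).trans (le_mul_of_one_le_right (by positivity) (mod_cast hG)))
    · calc |g (e j) * (e j).choose i| = |g (e j)| * (e j).choose i := by rw [abs_mul, Nat.abs_cast]
        _ ≤ G * 2 ^ X := mul_le_mul (hg j) (hchoose i j) (by positivity) (by positivity)
        _ = 2 ^ X * G := mul_comm _ _
  have := det_le (abv := AbsoluteValue.abs) hentry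
  rw [Fintype.card_sum, Fintype.card_fin, Fintype.card_fin, nsmul_eq_mul] at this
  exact_mod_cast this

theorem exists_det_interpolationMatrix_ne_zero {R : Type*} [CommRing R] [IsDomain R] [CharZero R]
    {M N : ℕ} {B good : Finset ℕ} {g : ℕ → R} {β : R} (hβ : β ≠ 1) (hg : ∀ b ∈ B, g b ≠ 0)
    (hgoodB : good ⊆ B) (hgood : ∀ b ∈ good, b + 1 ∈ B ∧ g (b + 1) = β * g b)
    (hcard : M + N ≤ #good) :
    ∃ e : Fin M ⊕ Fin N → ℕ, (∀ j, e j ∈ B) ∧ (interpolationMatrix M N g e).det ≠ 0 := by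
  let F := FractionRing R
  let φ := algebraMap R F
  have hφ : Function.Injective φ := IsFractionRing.injective R F
  have : CharZero F := charZero_of_injective_algebraMap hφ
  obtain ⟨e, he⟩ := exists_submatrix_det_ne_zero <|
    linearIndependent_row_interpolationMatrix (g := φ ∘ g) (β := φ β) (M := M) (N := N)
      ((map_ne_one_iff φ hφ).2 hβ) (fun b hb ↦ (map_ne_zero_iff φ hφ).2 (hg b hb)) hgoodB
      (fun b hb ↦ ⟨(hgood b hb).1, by simp [(hgood b hb).2]⟩) hcard
  refine ⟨fun j ↦ e j, fun j ↦ (e j).2, fun h ↦ he ?_⟩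
  rw [← map_zero φ, ← h, RingHom.map_det]
  congr 1
  ext (i | i) j <;> simp [interpolationMatrix]

/-- The points of `good` show that `g` satisfies a first-order recurrence often enough for the
interpolation determinants not to vanish. -/
theorem pow_le_of_padic_interpolation {p : ℕ} [Fact p.Prime] {K m N X G : ℕ}
    {B good : Finset ℕ} {g : ℕ → ℤ} {D β : ℤ_[p]} (hN : 0 < N) (hm : m ≤ K * N)
    (hβ : β ≠ 1) (hβK : (p : ℤ_[p]) ^ K ∣ β - 1) (hBX : ∀ b ∈ B, b < X) (hg : ∀ b ∈ B, g b ≠ 0)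
    (hG : ∀ b ∈ B, |g b| ≤ G) (hgD : ∀ b ∈ B, (p : ℤ_[p]) ^ m ∣ g b - D * β ^ b)
    (hgoodB : good ⊆ B)
    (hgood : ∀ b ∈ good, b + 1 ∈ B ∧ (g (b + 1) : ℤ_[p]) = β * g b) (hcard : 3 * N ≤ #good) :
    p ^ m ≤ 64 ^ X * G ^ 3 := by
  have hsize : N + N + N = 3 * N := by ring
  obtain ⟨e, heB, hdet⟩ := exists_det_interpolationMatrix_ne_zero (M := N + N) (N := N)
    (g := fun b ↦ (g b : ℤ_[p])) hβ (fun b hb ↦ Int.cast_ne_zero.2 (hg b hb)) hgoodB hgood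
    (hsize.trans_le hcard)
  have hcast : (interpolationMatrix (N + N) N (fun b ↦ (g b : ℤ_[p])) e).det =
      ((interpolationMatrix (N + N) N g e).det : ℤ_[p]) := by
    rw [Int.cast_det]
    congr 1
    ext (i | i) j <;> simp [interpolationMatrix]
  have hdvd : (p : ℤ) ^ (m * N) ∣ (interpolationMatrix (N + N) N g e).det := by
    rw [← PadicInt.pow_p_dvd_int_iff, ← hcast, pow_mul]
    refine pow_dvd_det_interpolationMatrix ?_ fun j ↦ hgD _ (heB j)
    exact (pow_dvd_pow _ hm).trans ((pow_mul (p : ℤ_[p]) K N).symm ▸ pow_dvd_pow_of_dvd hβK N)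
  have hdet₀ : (interpolationMatrix (N + N) N g e).det ≠ 0 := fun h ↦
    hdet (by rw [hcast, h, Int.cast_zero])
  have hG₁ : 1 ≤ G := by
    have hb := heB (.inr ⟨0, hN⟩)
    exact_mod_cast (Int.one_le_abs (hg _ hb)).trans (hG _ hb)
  have hNX : 3 * N ≤ 2 ^ X := by
    calc 3 * N ≤ #(range X) := hcard.trans (card_le_card fun b hb ↦ mem_range.2 (hBX b (hgoodB hb)))
      _ = X := card_range X
      _ ≤ 2 ^ X := Nat.lt_two_pow_self.le
  have hle := (Int.le_of_dvd (abs_pos.2 hdet₀) ((dvd_abs _ _).2 hdvd)).trans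
    (abs_det_interpolationMatrix_le (fun j ↦ (hBX _ (heB j)).le) (fun j ↦ hG _ (heB j)) hG₁)
  rw [hsize] at hle
  refine (Nat.pow_le_pow_iff_left hN.ne').1 ?_
  calc (p ^ m) ^ N = p ^ (m * N) := (pow_mul p m N).symm
    _ ≤ (3 * N).factorial * (2 ^ X * G) ^ (3 * N) := mod_cast hle
    _ ≤ (2 ^ X) ^ (3 * N) * (2 ^ X * G) ^ (3 * N) := by
        gcongr; exact (Nat.factorial_le_pow _).trans (Nat.pow_le_pow_left hNX _)
    _ = ((2 ^ 6) ^ X * G ^ 3) ^ N := by rw [← pow_mul 2 6 X]; ring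

end InterpolationDeterminant

/-! ### Simultaneous approximation and residues -/

theorem exists_natCast_mul_sub_intCast_lt {ι : Type*} [Fintype ι] (ξ : ι → ℝ) {R : ℕ} (hR : 0 < R) :
    ∃ q : ℕ, 0 < q ∧ q ≤ R ^ Fintype.card ι ∧ ∃ f : ι → ℤ, ∀ i, |q * ξ i - f i| * R < 1 := by
  classical
  have hR₀ : (0 : ℝ) < R := Nat.cast_pos.2 hR
  let box (q : ℕ) (i : ι) : ℕ := ⌊Int.fract (q * ξ i) * R⌋₊
  have hbox : ∀ q ∈ range (R ^ Fintype.card ι + 1),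
      box q ∈ Fintype.piFinset fun _ ↦ range R := by
    refine fun q _ ↦ Fintype.mem_piFinset.2 fun i ↦ mem_range.2 ?_
    rw [Nat.floor_lt (by positivity)]
    exact mul_lt_of_lt_one_left hR₀ (Int.fract_lt_one _)
  obtain ⟨q₁, h₁, q₂, h₂, hne, heq⟩ := exists_ne_map_eq_of_card_lt_of_maps_to
    (by simp [Fintype.card_piFinset]) hbox
  wlog hlt : q₁ < q₂ generalizing q₁ q₂
  · exact this q₂ h₂ q₁ h₁ hne.symm heq.symm (hne.lt_or_gt.resolve_left hlt)
  refine ⟨q₂ - q₁, by lia, by grind, fun i ↦ ⌊q₂ * ξ i⌋ - ⌊q₁ * ξ i⌋, fun i ↦ ?_⟩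
  have habs : |Int.fract (q₂ * ξ i) * R - Int.fract (q₁ * ξ i) * R| < 1 := by
    refine Int.abs_sub_lt_one_of_floor_eq_floor ?_
    rw [← Int.natCast_floor_eq_floor (by positivity), ← Int.natCast_floor_eq_floor (by positivity)]
    exact congrArg _ (congrFun heq i).symm
  rw [← sub_mul, abs_mul, abs_of_pos hR₀] at habs
  have hfract : ((q₂ - q₁ : ℕ) : ℝ) * ξ i - (⌊q₂ * ξ i⌋ - ⌊q₁ * ξ i⌋ : ℤ) =
      Int.fract (q₂ * ξ i) - Int.fract (q₁ * ξ i) := by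
    rw [Nat.cast_sub hlt.le, Int.fract, Int.fract, Int.cast_sub]
    ring
  rwa [hfract]

theorem exists_dvd_natAbs_mul_sub_mul_le {ι : Type*} [Fintype ι] (α : ι → ℤ) {n Φ R : ℕ}
    (hn : 0 < n) (hΦ : 0 < Φ) (hR : 0 < R) :
    ∃ (Q : ℕ) (F : ι → ℤ), 0 < Q ∧ Q ≤ Φ * (Φ * R) ^ Fintype.card ι ∧ Φ ∣ Q ∧
      (∀ i, (Φ : ℤ) ∣ F i) ∧ ∀ i, (Q * α i - n * F i).natAbs ≤ n / R := by
  obtain ⟨q, hq, hqR, f, hf⟩ :=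
    exists_natCast_mul_sub_intCast_lt (fun i ↦ (α i : ℝ) / n) (Nat.mul_pos hΦ hR)
  refine ⟨Φ * q, fun i ↦ Φ * f i, Nat.mul_pos hΦ hq, Nat.mul_le_mul_left _ hqR, dvd_mul_right _ _,
    fun i ↦ dvd_mul_right _ _, fun i ↦ (Nat.le_div_iff_mul_le hR).2 ?_⟩
  have hn₀ : (0 : ℝ) < n := Nat.cast_pos.2 hn
  have hscale : ((Φ * q : ℕ) * α i - n * (Φ * f i) : ℝ) = (q * (α i / n) - f i) * Φ * n := by
    push_cast
    field_simp
  have : |((Φ * q : ℕ) * α i - n * (Φ * f i) : ℝ)| * R ≤ n := by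
    rw [hscale, abs_mul, abs_mul, Nat.abs_cast, Nat.abs_cast, mul_right_comm, mul_assoc _ (Φ : ℝ)]
    exact mul_le_of_le_one_left hn₀.le (by exact_mod_cast (hf i).le)
  zify
  exact_mod_cast this

theorem mul_le_card_filter_mod_add_le {n Q T X A J : ℕ} (hQ : 0 < Q) (hTn : T < n)
    (hA : A * n ≤ X * Q) (hJ : (J + 1) * Q ≤ T) :
    A * J ≤ #{b ∈ range X | b + 1 < X ∧ Q * b % n + Q ≤ T} := by
  have exists_multiple (a : ℕ) : ∃ k, a * n ≤ Q * k ∧ Q * k < a * n + Q := by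
    refine ⟨(a * n + Q - 1) / Q, ?_⟩
    have := Nat.div_add_mod (a * n + Q - 1) Q
    have := Nat.mod_lt (a * n + Q - 1) hQ
    lia
  choose k hk_ge hk_lt using exists_multiple
  have hoffset {a j : ℕ} (hj : j < J) : ∃ r, Q * (k a + j) = r + n * a ∧ r + Q ≤ T := by
    refine ⟨Q * (k a + j) - n * a, ?_⟩
    have := hk_ge a
    have := hk_lt a
    have : (j + 2) * Q ≤ (J + 1) * Q := Nat.mul_le_mul_right Q (by lia)
    grind
  have hdivmod {a j : ℕ} (hj : j < J) :
      Q * (k a + j) / n = a ∧ Q * (k a + j) % n + Q ≤ T := by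
    obtain ⟨r, hr, hrT⟩ := hoffset (a := a) hj
    rw [hr, Nat.add_mul_div_left _ _ (by lia), Nat.add_mul_mod_self_left,
      Nat.div_eq_of_lt (by lia), Nat.mod_eq_of_lt (by lia)]
    exact ⟨zero_add a, hrT⟩
  calc A * J = #(range A ×ˢ range J) := by rw [card_product, card_range, card_range]
    _ ≤ _ := card_le_card_of_injOn (fun x ↦ k x.1 + x.2) ?_ ?_
  · rintro ⟨a, j⟩ h
    obtain ⟨ha, hj⟩ := mem_product.1 (mem_coe.1 h)
    rw [mem_range] at ha hj
    obtain ⟨r, hr, hrT⟩ := hoffset (a := a) hj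
    have hX : k a + j + 1 < X := by
      have : (a + 1) * n ≤ A * n := Nat.mul_le_mul_right n ha
      refine lt_of_mul_lt_mul_left (a := Q) ?_ (Nat.zero_le _)
      grind
    exact mem_coe.2 (mem_filter.2 ⟨mem_range.2 (by lia), hX, (hdivmod hj).2⟩)
  · rintro ⟨a, j⟩ h ⟨a', j'⟩ h' heq
    have hj := mem_range.1 (mem_product.1 (mem_coe.1 h)).2
    have hj' := mem_range.1 (mem_product.1 (mem_coe.1 h')).2
    obtain rfl : a = a' := (hdivmod hj).1.symm.trans
      ((congrArg (Q * · / n) heq).trans (hdivmod hj').1)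
    exact congrArg (a, ·) (Nat.add_left_cancel heq)

theorem mul_le_four_mul_card_filter_mod_add_le {n Q T X : ℕ} (hQ : 0 < Q) (hTn : T < n)
    (hQT : 4 * Q ≤ T) (hX : n ≤ X * Q) :
    X * T ≤ 4 * n * #{b ∈ range X | b + 1 < X ∧ Q * b % n + Q ≤ T} := by
  have hn : 0 < n := by lia
  have hfour : 4 ≤ T / Q := (Nat.le_div_iff_mul_le hQ).2 hQT
  obtain ⟨J, hJ⟩ := Nat.exists_eq_add_of_lt (show 0 < T / Q by lia)
  rw [zero_add] at hJ
  have hXQ : X * Q ≤ 2 * (X * Q / n) * n := by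
    have := Nat.lt_mul_div_succ (X * Q) hn
    have : n * 1 ≤ n * (X * Q / n) := Nat.mul_le_mul_left n ((Nat.one_le_div_iff hn).2 hX)
    linarith
  have hTJ : T ≤ 2 * J * Q := by
    have := Nat.lt_mul_div_succ T hQ
    rw [hJ] at this
    nlinarith
  have hcard := mul_le_card_filter_mod_add_le (J := J) hQ hTn (Nat.div_mul_le_self (X * Q) n)
    ((Nat.le_div_iff_mul_le hQ).1 hJ.ge)
  refine le_of_mul_le_mul_right ?_ hQ
  calc X * T * Q = (X * Q) * T := by ring
    _ ≤ (2 * (X * Q / n) * n) * (2 * J * Q) := Nat.mul_le_mul hXQ hTJ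
    _ = 4 * n * (X * Q / n * J) * Q := by ring
    _ ≤ _ := Nat.mul_le_mul_right Q (Nat.mul_le_mul_left _ hcard)

theorem three_mul_le_card_filter_mod_add_le {n Q X N c : ℕ} (hc : 2 ≤ c) (hQ : 0 < Q)
    (hQn : 4 * Q ≤ n / c) (hX : n ≤ X * Q) (hNX : 24 * c * N ≤ X) :
    3 * N ≤ #{b ∈ range X | b + 1 < X ∧ Q * b % n + Q ≤ n / c} := by
  have hT : 0 < n / c := by lia
  have hTn : n / c < n := Nat.div_lt_self (Nat.pos_of_div_pos hT) hc
  have hnT : n ≤ 2 * c * (n / c) := by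
    have := Nat.lt_mul_div_succ n (by lia : 0 < c)
    have : c * 1 ≤ c * (n / c) := Nat.mul_le_mul_left c hT
    linarith
  refine le_of_mul_le_mul_left ?_ (by positivity : 0 < 8 * (c * (n / c)))
  calc 8 * (c * (n / c)) * (3 * N) = 24 * c * N * (n / c) := by ring
    _ ≤ X * (n / c) := Nat.mul_le_mul_right _ hNX
    _ ≤ 4 * n * _ := mul_le_four_mul_card_filter_mod_add_le hQ hTn hQn hX
    _ ≤ 4 * (2 * c * (n / c)) * _ := by gcongr
    _ = 8 * (c * (n / c)) * _ := by ring

theorem mul_succ_div_eq_of_mod_add_lt {n Q b : ℕ} (h : Q * b % n + Q < n) :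
    Q * (b + 1) / n = Q * b / n ∧ Q * (b + 1) % n = Q * b % n + Q := by
  have hstep : Q * (b + 1) = Q * b % n + Q + n * (Q * b / n) := by
    have := Nat.mod_add_div (Q * b) n
    grind
  rw [hstep, Nat.add_mul_mod_self_left, Nat.mod_eq_of_lt h, Nat.add_mul_div_left _ _ (by lia),
    Nat.div_eq_of_lt h, zero_add]
  exact ⟨rfl, rfl⟩

/-! ### Principal units of the `p`-adic integers -/

theorem mul_prod_zpow_zpow_div_zpow {G ι : Type*} [CommGroup G] [Fintype ι] (z : G) (U : ι → G)
    (Q n a b : ℤ) (F α : ι → ℤ) :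
    (z ^ Q * ∏ i, U i ^ F i) ^ b / (z ^ n * ∏ i, U i ^ α i) ^ a =
      z ^ (Q * b - n * a) * ∏ i, U i ^ (F i * b - α i * a) := by
  simp only [mul_zpow, ← prod_zpow, zpow_sub, zpow_mul, prod_mul_distrib, prod_inv_distrib,
    div_eq_mul_inv, mul_inv]
  exact mul_mul_mul_comm _ _ _ _

section PrincipalUnits

variable {p : ℕ} [Fact p.Prime]

theorem isUnit_natCast_of_coprime {x : ℕ} (hx : p.Coprime x) : IsUnit (x : ℤ_[p]) :=
  PadicInt.isUnit_iff.2 (PadicInt.norm_natCast_eq_one_iff.2 hx)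

variable (p) in
/-- The group of `p`-adic units congruent to `1` modulo `p ^ m`. -/
noncomputable def principalUnits (m : ℕ) : Subgroup ℤ_[p]ˣ :=
  (Units.map (PadicInt.toZModPow (p := p) m : ℤ_[p] →* ZMod (p ^ m))).ker

theorem div_mem_principalUnits_iff {m : ℕ} {u v : ℤ_[p]ˣ} :
    u / v ∈ principalUnits p m ↔
      PadicInt.toZModPow m (u : ℤ_[p]) = PadicInt.toZModPow m (v : ℤ_[p]) := by
  rw [principalUnits, MonoidHom.mem_ker, map_div, div_eq_one, Units.ext_iff]
  rfl

theorem div_mem_principalUnits_iff_dvd_sub {m : ℕ} {u v : ℤ_[p]ˣ} :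
    u / v ∈ principalUnits p m ↔ (p : ℤ_[p]) ^ m ∣ u - v := by
  rw [div_mem_principalUnits_iff, ← sub_eq_zero, ← map_sub, ← RingHom.mem_ker,
    PadicInt.ker_toZModPow, Ideal.mem_span_singleton]

theorem mem_principalUnits_iff_dvd_sub_one {m : ℕ} {u : ℤ_[p]ˣ} :
    u ∈ principalUnits p m ↔ (p : ℤ_[p]) ^ m ∣ u - 1 := by
  rw [← div_one u, div_mem_principalUnits_iff_dvd_sub, div_one, Units.val_one]

theorem div_mem_principalUnits_iff_modEq {m x y : ℕ} {u v : ℤ_[p]ˣ} (hu : (u : ℤ_[p]) = x)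
    (hv : (v : ℤ_[p]) = y) : u / v ∈ principalUnits p m ↔ x ≡ y [MOD p ^ m] := by
  rw [div_mem_principalUnits_iff, hu, hv, map_natCast, map_natCast, ZMod.natCast_eq_natCast_iff]

theorem pow_mem_principalUnits_of_totient_dvd {m Φ : ℕ} (h : (p ^ m).totient ∣ Φ) (u : ℤ_[p]ˣ) :
    u ^ Φ ∈ principalUnits p m := by
  obtain ⟨k, rfl⟩ := h
  rw [principalUnits, MonoidHom.mem_ker, map_pow, pow_mul, ZMod.pow_totient, one_pow]

theorem zpow_mem_principalUnits_of_totient_dvd {m Φ : ℕ} (h : (p ^ m).totient ∣ Φ) (u : ℤ_[p]ˣ)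
    {k : ℤ} (hk : (Φ : ℤ) ∣ k) : u ^ k ∈ principalUnits p m := by
  obtain ⟨j, rfl⟩ := hk
  rw [zpow_mul, zpow_natCast]
  exact zpow_mem (pow_mem_principalUnits_of_totient_dvd h u) j

end PrincipalUnits

section UnitProducts

variable {p : ℕ} [Fact p.Prime] {ι : Type*} [Fintype ι] {l : ι → ℕ} {U : ι → ℤ_[p]ˣ} {ζ : ℕ}
  {Z : ℤ_[p]ˣ}

theorem coe_mul_prod_pow (hZ : (Z : ℤ_[p]) = ζ) (hU : ∀ i, (U i : ℤ_[p]) = l i) (k : ℕ)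
    (e : ι → ℕ) : ((Z ^ k * ∏ i, U i ^ e i : ℤ_[p]ˣ) : ℤ_[p]) = (ζ ^ k * ∏ i, l i ^ e i : ℕ) := by
  push_cast [hZ, hU]
  rfl

theorem pos_of_coe_eq_natCast (hZ : (Z : ℤ_[p]) = ζ) : 0 < ζ :=
  Nat.pos_of_ne_zero fun h ↦ Z.ne_zero (by rw [hZ, h, Nat.cast_zero])

/-- Numerator and denominator are congruent modulo `p ^ m` and smaller than `p ^ m`. -/
theorem prod_zpow_eq_one_of_mem_principalUnits (hU : ∀ i, (U i : ℤ_[p]) = l i) {d : ι → ℤ}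
    {D m : ℕ} (hd : ∀ i, (d i).natAbs ≤ D) (hDm : (∏ i, l i) ^ D < p ^ m)
    (hmem : ∏ i, U i ^ d i ∈ principalUnits p m) : ∏ i, U i ^ d i = 1 := by
  have hcoe (e : ι → ℕ) : ((∏ i, U i ^ e i : ℤ_[p]ˣ) : ℤ_[p]) = (∏ i, l i ^ e i : ℕ) := by
    push_cast [hU]; rfl
  have hlt {e : ι → ℕ} (he : ∀ i, e i ≤ D) : ∏ i, l i ^ e i < p ^ m := by
    refine lt_of_le_of_lt ?_ hDm
    rw [← prod_pow]
    exact prod_le_prod' fun i _ ↦ Nat.pow_le_pow_right (pos_of_coe_eq_natCast (hU i)) (he i)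
  have hsplit : ∏ i, U i ^ d i = (∏ i, U i ^ (d i).toNat) / ∏ i, U i ^ (-d i).toNat := by
    rw [← prod_div_distrib]
    refine prod_congr rfl fun i _ ↦ ?_
    rw [← zpow_natCast, ← zpow_natCast, div_eq_mul_inv, ← zpow_sub, Int.toNat_sub_toNat_neg]
  rw [hsplit] at hmem ⊢
  have hmod := (div_mem_principalUnits_iff_modEq (hcoe _) (hcoe _)).1 hmem
  rw [div_eq_one, Units.ext_iff, hcoe, hcoe,
    hmod.eq_of_lt_of_lt (hlt fun i ↦ by grind) (hlt fun i ↦ by grind)]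

theorem zpow_mul_prod_ne_one (hU : ∀ i, (U i : ℤ_[p]) = l i) {n Q D m : ℕ} {α F : ι → ℤ}
    (hd : ∀ i, (Q * α i - n * F i).natAbs ≤ D) (hDm : (∏ i, l i) ^ D < p ^ m)
    (hΛ : Z ^ n * ∏ i, U i ^ α i ∈ principalUnits p m)
    (htors : (Z ^ n * ∏ i, U i ^ α i) ^ Q ≠ 1) : Z ^ Q * ∏ i, U i ^ F i ≠ 1 := by
  intro hβ
  have hpow : (Z ^ n * ∏ i, U i ^ α i) ^ Q = ∏ i, U i ^ (Q * α i - n * F i) := by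
    have := mul_prod_zpow_zpow_div_zpow Z U n Q n Q α F
    simpa [hβ, mul_comm] using this
  exact htors <| hpow.trans <| prod_zpow_eq_one_of_mem_principalUnits hU hd hDm
    (hpow ▸ pow_mem hΛ Q)

theorem exists_natCast_eq_prod_mul_pow_div_pow (hZ : (Z : ℤ_[p]) = ζ)
    (hU : ∀ i, (U i : ℤ_[p]) = l i) {n Q T a b : ℕ} {α F : ι → ℤ} {E : ι → ℕ}
    (hab : n * a ≤ Q * b) (hT : Q * b ≤ n * a + T) (hE : ∀ i, (F i * b - α i * a).natAbs ≤ E i) :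
    ∃ x : ℕ, x ≤ ζ ^ T * ∏ i, l i ^ (2 * E i) ∧ (x : ℤ_[p]) =
      ((∏ i, U i ^ E i) * (Z ^ Q * ∏ i, U i ^ F i) ^ b /
        (Z ^ n * ∏ i, U i ^ α i) ^ a : ℤ_[p]ˣ) := by
  let e (i : ι) : ℕ := (E i + (F i * b - α i * a)).toNat
  have he (i) : (e i : ℤ) = E i + (F i * b - α i * a) := Int.toNat_of_nonneg (by grind)
  refine ⟨ζ ^ (Q * b - n * a) * ∏ i, l i ^ e i, ?_, ?_⟩
  · refine Nat.mul_le_mul (Nat.pow_le_pow_right (pos_of_coe_eq_natCast hZ) (by lia))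
      (prod_le_prod' fun i _ ↦ Nat.pow_le_pow_right (pos_of_coe_eq_natCast (hU i)) ?_)
    have := hE i
    have := he i
    grind
  · rw [← coe_mul_prod_pow hZ hU, mul_div_assoc]
    have := mul_prod_zpow_zpow_div_zpow Z U Q n a b F α
    simp only [zpow_natCast] at this
    rw [this, mul_left_comm, ← prod_mul_distrib]
    simp only [← zpow_natCast, ← zpow_add, he]
    rw [Nat.cast_sub hab]
    rfl

end UnitProducts

theorem natAbs_mul_sub_mul_le {n c T Q a b : ℕ} {α F : ℤ} (hn : 0 < n) (hc : 0 < c)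
    (hT : T * c ≤ n) (hab : n * a ≤ Q * b) (habT : Q * b ≤ n * a + T)
    (hQF : (Q * α - n * F).natAbs ≤ n) : (F * b - α * a).natAbs ≤ b + α.natAbs / c := by
  obtain ⟨ρ, hρ⟩ := Nat.exists_eq_add_of_le hab
  have hρT : ρ ≤ T := by lia
  have hsplit : n * (F * b - α * a) = α * ρ - (Q * α - n * F) * b := by
    have : (Q * b : ℤ) = n * a + ρ := mod_cast hρ
    linear_combination α * this
  have hbound : n * (F * b - α * a).natAbs ≤ α.natAbs * T + n * b :=
    calc n * (F * b - α * a).natAbs = (n * (F * b - α * a)).natAbs := by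
          rw [Int.natAbs_mul, Int.natAbs_natCast]
      _ ≤ (α * ρ).natAbs + ((Q * α - n * F) * b).natAbs := hsplit ▸ Int.natAbs_sub_le _ _
      _ = α.natAbs * ρ + (Q * α - n * F).natAbs * b := by
          rw [Int.natAbs_mul, Int.natAbs_mul, Int.natAbs_natCast, Int.natAbs_natCast]
      _ ≤ α.natAbs * T + n * b := by gcongr
  rw [← Nat.sub_le_iff_le_add', Nat.le_div_iff_mul_le hc]
  refine le_of_mul_le_mul_left ?_ hn
  calc n * (((F * b - α * a).natAbs - b) * c)
      = (n * (F * b - α * a).natAbs - n * b) * c := by rw [← Nat.mul_sub]; ring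
    _ ≤ α.natAbs * T * c := Nat.mul_le_mul_right c (by lia)
    _ ≤ n * α.natAbs := by rw [mul_assoc, mul_comm n]; gcongr

section Approximation

variable {p : ℕ} [Fact p.Prime] {ι : Type*} [Fintype ι] {l : ι → ℕ} {U : ι → ℤ_[p]ˣ} {ζ : ℕ}
  {Z : ℤ_[p]ˣ}

/-- The integers `g b` are `D * β ^ b / Λ ^ ⌊Q b / n⌋`, where `Λ` and `β` are the units in `hΛ` and
in the recurrence: since `Λ` is close to `1` they approximate `D * β ^ b`, and they satisfy its
recurrence exactly as long as the floor does not jump. -/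
theorem exists_approx_pow (hZ : (Z : ℤ_[p]) = ζ) (hU : ∀ i, (U i : ℤ_[p]) = l i)
    {n Q T X m c : ℕ} {α F : ι → ℤ} (hn : 0 < n) (hc : 0 < c) (hTc : T * c ≤ n) (hTn : T < n)
    (hQF : ∀ i, (Q * α i - n * F i).natAbs ≤ n)
    (hΛ : Z ^ n * ∏ i, U i ^ α i ∈ principalUnits p m) :
    ∃ (g : ℕ → ℕ) (D : ℤ_[p]), (∀ b < X, Q * b % n ≤ T → g b ≠ 0 ∧
        g b ≤ ζ ^ T * ∏ i, l i ^ (2 * (X + (α i).natAbs / c)) ∧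
        (p : ℤ_[p]) ^ m ∣ g b - D * ((Z ^ Q * ∏ i, U i ^ F i : ℤ_[p]ˣ) : ℤ_[p]) ^ b) ∧
      ∀ b, b + 1 < X → Q * b % n + Q ≤ T →
        (g (b + 1) : ℤ_[p]) = (Z ^ Q * ∏ i, U i ^ F i : ℤ_[p]ˣ) * g b := by
  set Λ := Z ^ n * ∏ i, U i ^ α i
  set β := Z ^ Q * ∏ i, U i ^ F i
  set D := ∏ i, U i ^ (X + (α i).natAbs / c)
  have hexists : ∀ b, b < X ∧ Q * b % n ≤ T →
      ∃ x : ℕ, x ≤ ζ ^ T * ∏ i, l i ^ (2 * (X + (α i).natAbs / c)) ∧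
        (x : ℤ_[p]) = (D * β ^ b / Λ ^ (Q * b / n) : ℤ_[p]ˣ) := by
    rintro b ⟨hbX, hbT⟩
    have hfloor : n * (Q * b / n) ≤ Q * b := Nat.mul_div_le _ _
    have hmod : Q * b ≤ n * (Q * b / n) + T := by
      have := Nat.div_add_mod (Q * b) n
      lia
    refine exists_natCast_eq_prod_mul_pow_div_pow hZ hU hfloor hmod fun i ↦ ?_
    exact (natAbs_mul_sub_mul_le hn hc hTc hfloor hmod (hQF i)).trans
      (Nat.add_le_add_right hbX.le _)
  choose! g hgle hg using hexists
  refine ⟨g, D, fun b hbX hbT ↦ ⟨fun h₀ ↦ ?_, hgle b ⟨hbX, hbT⟩, ?_⟩, fun b hbX hbT ↦ ?_⟩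
  · exact Units.ne_zero _ ((hg b ⟨hbX, hbT⟩).symm.trans (mod_cast h₀))
  · rw [hg b ⟨hbX, hbT⟩, ← Units.val_pow_eq_pow_val, ← Units.val_mul,
      ← div_mem_principalUnits_iff_dvd_sub, div_div_cancel_left]
    exact inv_mem (pow_mem hΛ _)
  · obtain ⟨hdiv, hmod⟩ := mul_succ_div_eq_of_mod_add_lt (hbT.trans_lt hTn)
    rw [hg _ ⟨hbX, hmod.trans_le hbT⟩, hg b ⟨by lia, by lia⟩, hdiv, ← Units.val_mul, pow_succ',
      mul_left_comm, mul_div_assoc]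

theorem pow_le_of_mem_principalUnits (hZ : (Z : ℤ_[p]) = ζ) (hU : ∀ i, (U i : ℤ_[p]) = l i)
    {n Q c N X K m : ℕ} {α F : ι → ℤ} (hc : 2 ≤ c) (hN : 0 < N) (hNX : 24 * c * N ≤ X)
    (hm : m ≤ K * N) (hQ : 0 < Q) (hQn : 4 * Q ≤ n / c) (hnX : n ≤ X * Q)
    (hQF : ∀ i, (Q * α i - n * F i).natAbs ≤ n)
    (hΛ : Z ^ n * ∏ i, U i ^ α i ∈ principalUnits p m)
    (hβ : Z ^ Q * ∏ i, U i ^ F i ∈ principalUnits p K) (hβ₁ : Z ^ Q * ∏ i, U i ^ F i ≠ 1) :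
    p ^ m ≤ 64 ^ X * (ζ ^ (n / c) * ∏ i, l i ^ (2 * (X + (α i).natAbs / c))) ^ 3 := by
  have hn : 0 < n := Nat.pos_of_div_pos (by lia : 0 < n / c)
  have hTn : n / c < n := Nat.div_lt_self hn hc
  obtain ⟨g, D, hg, hstep⟩ :=
    exists_approx_pow (X := X) hZ hU hn (by lia) (Nat.div_mul_le_self n c) hTn hQF hΛ
  let B := {b ∈ range X | Q * b % n ≤ n / c}
  replace hg (b : ℕ) (hb : b ∈ B) := hg b (mem_range.1 (mem_filter.1 hb).1) (mem_filter.1 hb).2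
  refine pow_le_of_padic_interpolation (g := fun b ↦ (g b : ℤ)) (B := B)
    (good := {b ∈ range X | b + 1 < X ∧ Q * b % n + Q ≤ n / c}) hN hm
    (fun h ↦ hβ₁ (Units.val_eq_one.1 h)) (mem_principalUnits_iff_dvd_sub_one.1 hβ)
    (fun b hb ↦ mem_range.1 (mem_filter.1 hb).1) (fun b hb ↦ mod_cast (hg b hb).1)
    (fun b hb ↦ (Nat.abs_cast _).trans_le (mod_cast (hg b hb).2.1))
    (fun b hb ↦ mod_cast (hg b hb).2.2)
    (monotone_filter_right _ fun b _ hb ↦ (Nat.le_add_right _ Q).trans hb.2) (fun b hb ↦ ?_)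
    (three_mul_le_card_filter_mod_add_le hc hQ hQn hnX hNX)
  obtain ⟨-, hbX, hbT⟩ := mem_filter.1 hb
  refine ⟨mem_filter.2 ⟨mem_range.2 hbX, ?_⟩, mod_cast hstep b hbX hbT⟩
  exact (mul_succ_div_eq_of_mod_add_lt (hbT.trans_lt hTn)).2.trans_le hbT

end Approximation

/-! ### Congruences between products of powers -/

theorem le_two_mul_mul_div {M h : ℕ} (hM : 0 < M) (hMh : M ≤ h) : h ≤ 2 * M * (h / M) := by
  have h₁ := Nat.lt_mul_div_succ h hM
  have h₂ : M * 1 ≤ M * (h / M) := Nat.mul_le_mul_left M (Nat.div_pos hMh hM)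
  lia

theorem lt_pow_of_lt_pow_of_pow_le {H q W X k : ℕ} (hH : 0 < H) (hHq : H < q ^ k)
    (hq : q ^ (24 * k) ≤ W ^ (X * (24 * k)) * H ^ 12) : H < W ^ (2 * k * X) := by
  have hk : k ≠ 0 := by
    rintro rfl
    rw [pow_zero] at hHq
    lia
  refine lt_of_pow_lt_pow_left₀ (12 * k) (Nat.zero_le _) ?_
  refine lt_of_mul_lt_mul_right ?_ (Nat.zero_le (H ^ (12 * k)))
  calc H ^ (12 * k) * H ^ (12 * k) = H ^ (24 * k) := by ring
    _ < (q ^ k) ^ (24 * k) := Nat.pow_lt_pow_left hHq (by lia)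
    _ = (q ^ (24 * k)) ^ k := pow_right_comm q k (24 * k)
    _ ≤ (W ^ (X * (24 * k)) * H ^ 12) ^ k := Nat.pow_le_pow_left hq k
    _ = (W ^ (2 * k * X)) ^ (12 * k) * H ^ (12 * k) := by ring

theorem pow_lt_pow_of_pow_lt_pow {P q k ω n H : ℕ} (hP : P < 2 ^ ω) (hH : 2 ^ n ≤ H)
    (hHq : H < q ^ k) : P ^ (n / (2 * k * ω)) < q := by
  refine lt_of_pow_lt_pow_left₀ k (Nat.zero_le q) (lt_of_le_of_lt ?_ (hH.trans_lt hHq))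
  calc (P ^ (n / (2 * k * ω))) ^ k ≤ ((2 ^ ω) ^ (n / (2 * k * ω))) ^ k := by gcongr
    _ = 2 ^ (n / (2 * k * ω) * (k * ω)) := by ring
    _ ≤ 2 ^ (n / (2 * k * ω) * (2 * k * ω)) := by
      gcongr <;> lia
    _ ≤ 2 ^ n := Nat.pow_le_pow_right two_pos (Nat.div_mul_le_self n _)

section CongruenceBound

variable {ι : Type*} [Fintype ι] {l : ι → ℕ} {ζ : ℕ}

theorem pow_div_mul_prod_pow_le (hζ : 0 < ζ) (hl : ∀ i, 0 < l i) {n c X H : ℕ} {u v : ι → ℕ}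
    (hA : ζ ^ n * ∏ i, l i ^ u i ≤ H) (hB : ∏ i, l i ^ v i ≤ H) :
    (ζ ^ (n / c) * ∏ i, l i ^ (2 * (X + (u i - v i : ℤ).natAbs / c))) ^ c ≤
      H ^ 4 * (∏ i, l i) ^ (2 * X * c) := by
  have hexp (i) : 2 * (X + (u i - v i : ℤ).natAbs / c) * c ≤ 2 * X * c + 2 * (u i + v i) := by
    have h₁ := Nat.div_mul_le_self (u i - v i : ℤ).natAbs c
    have h₂ : (u i - v i : ℤ).natAbs ≤ u i + v i := by lia
    nlinarith
  calc (ζ ^ (n / c) * ∏ i, l i ^ (2 * (X + (u i - v i : ℤ).natAbs / c))) ^ c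
      = ζ ^ (n / c * c) * ∏ i, l i ^ (2 * (X + (u i - v i : ℤ).natAbs / c) * c) := by
        simp only [mul_pow, ← prod_pow, ← pow_mul]
    _ ≤ ζ ^ n * ∏ i, l i ^ (2 * X * c + 2 * (u i + v i)) :=
        Nat.mul_le_mul (Nat.pow_le_pow_right hζ (Nat.div_mul_le_self n c))
          (prod_le_prod' fun i _ ↦ Nat.pow_le_pow_right (hl i) (hexp i))
    _ = (ζ ^ n * ∏ i, l i ^ u i) * (∏ i, l i ^ u i) * (∏ i, l i ^ v i) ^ 2 *
          (∏ i, l i) ^ (2 * X * c) := by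
        simp only [pow_add, prod_mul_distrib, prod_pow, mul_comm 2 (_ + _), pow_mul]
        ring
    _ ≤ H * H * H ^ 2 * (∏ i, l i) ^ (2 * X * c) := by
        gcongr
        exact (Nat.le_mul_of_pos_left _ (pow_pos hζ n)).trans hA
    _ = H ^ 4 * (∏ i, l i) ^ (2 * X * c) := by ring

variable {p : ℕ} [hp : Fact p.Prime]

theorem div_pow_ne_one_of_coe_ne {x y : ℕ} {u v : ℤ_[p]ˣ} (hu : (u : ℤ_[p]) = x)
    (hv : (v : ℤ_[p]) = y) (hne : x ≠ y) {Q : ℕ} (hQ : Q ≠ 0) : (u / v) ^ Q ≠ 1 := by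
  rw [div_pow, Ne, div_eq_one, Units.ext_iff, Units.val_pow_eq_pow_val, Units.val_pow_eq_pow_val,
    hu, hv]
  exact mod_cast fun h ↦ hne (Nat.pow_left_injective hQ h)

theorem pos_of_coprime_prime {x : ℕ} (hx : p.Coprime x) : 0 < x :=
  Nat.pos_of_ne_zero fun h ↦ hp.out.ne_one ((Nat.coprime_zero_right p).1 (h ▸ hx))

theorem pow_pow_le_mul_of_modEq (hζ : p.Coprime ζ) (hl : ∀ i, p.Coprime (l i))
    {n m c H K N R X Φ : ℕ} {u v : ι → ℕ} (hc : 2 ≤ c) (hR : 0 < R) (hN : 0 < N) (hΦ : 0 < Φ)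
    (hKΦ : (p ^ K).totient ∣ Φ) (hn : 4 * (Φ * (Φ * R) ^ Fintype.card ι) ≤ n / c)
    (hnX : n ≤ X * Φ) (hNX : 24 * c * N ≤ X) (hm : m ≤ K * N)
    (hRm : (∏ i, l i) ^ (n / R) < p ^ m)
    (hA : ζ ^ n * ∏ i, l i ^ u i ≤ H) (hB : ∏ i, l i ^ v i ≤ H)
    (hAB : ζ ^ n * ∏ i, l i ^ u i ≡ ∏ i, l i ^ v i [MOD p ^ m])
    (hne : ζ ^ n * ∏ i, l i ^ u i ≠ ∏ i, l i ^ v i) :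
    (p ^ m) ^ c ≤ (64 * (∏ i, l i) ^ 6) ^ (X * c) * H ^ 12 := by
  obtain ⟨Z, hZ⟩ := isUnit_natCast_of_coprime hζ
  choose U hU using fun i ↦ isUnit_natCast_of_coprime (hl i)
  have hn₀ : 0 < n := Nat.pos_of_div_pos (lt_of_lt_of_le (by positivity) hn)
  obtain ⟨Q, F, hQ, hQΦ, ⟨q, hq⟩, hF, hQF⟩ :=
    exists_dvd_natAbs_mul_sub_mul_le (fun i ↦ (u i - v i : ℤ)) hn₀ hΦ hR
  have hA' := coe_mul_prod_pow hZ hU n u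
  have hB' : ((∏ i, U i ^ v i : ℤ_[p]ˣ) : ℤ_[p]) = (∏ i, l i ^ v i : ℕ) := by
    simpa only [pow_zero, one_mul] using coe_mul_prod_pow hZ hU 0 v
  have hdiv : Z ^ n * ∏ i, U i ^ (u i - v i : ℤ) = (Z ^ n * ∏ i, U i ^ u i) / ∏ i, U i ^ v i := by
    simp only [zpow_sub, zpow_natCast, prod_mul_distrib, prod_inv_distrib,
      div_eq_mul_inv, mul_assoc]
  have hΛ : Z ^ n * ∏ i, U i ^ (u i - v i : ℤ) ∈ principalUnits p m :=
    hdiv ▸ (div_mem_principalUnits_iff_modEq hA' hB').2 hAB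
  have htors : (Z ^ n * ∏ i, U i ^ (u i - v i : ℤ)) ^ Q ≠ 1 :=
    hdiv ▸ div_pow_ne_one_of_coe_ne hA' hB' hne hQ.ne'
  have hβ : Z ^ Q * ∏ i, U i ^ F i ∈ principalUnits p K :=
    mul_mem (hq ▸ pow_mul Z Φ q ▸ pow_mem (pow_mem_principalUnits_of_totient_dvd hKΦ Z) q)
      (prod_mem fun i _ ↦ zpow_mem_principalUnits_of_totient_dvd hKΦ (U i) (hF i))
  have hq₀ : 0 < q := Nat.pos_of_mul_pos_left (hq ▸ hQ)
  have hbound := pow_le_of_mem_principalUnits hZ hU hc hN hNX hm hQ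
    (le_trans (by gcongr) hn) (hnX.trans (by rw [hq]; gcongr; exact Nat.le_mul_of_pos_right _ hq₀))
    (fun i ↦ (hQF i).trans (Nat.div_le_self n R)) hΛ hβ (zpow_mul_prod_ne_one hU hQF hRm hΛ htors)
  calc (p ^ m) ^ c
      ≤ (64 ^ X * (ζ ^ (n / c) * ∏ i, l i ^ (2 * (X + (u i - v i : ℤ).natAbs / c))) ^ 3) ^ c := by
        gcongr
    _ = 64 ^ (X * c) *
          ((ζ ^ (n / c) * ∏ i, l i ^ (2 * (X + (u i - v i : ℤ).natAbs / c))) ^ c) ^ 3 := by ring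
    _ ≤ 64 ^ (X * c) * (H ^ 4 * (∏ i, l i) ^ (2 * X * c)) ^ 3 := by
        gcongr
        exact pow_div_mul_prod_pow_le (pos_of_coprime_prime hζ)
          (fun i ↦ pos_of_coprime_prime (hl i)) hA hB
    _ = (64 * (∏ i, l i) ^ 6) ^ (X * c) * H ^ 12 := by ring

/-- The parameters are dictated by `h = ⌊log₂ H⌋`: there are `h / D` interpolation nodes, and the
interpolation has order `h / M`. -/
theorem pow_pow_le_of_modEq (hζ : p.Coprime ζ) (hl : ∀ i, p.Coprime (l i))
    {n m k ω D M H Φ : ℕ} {u v : ι → ℕ} (hk : 0 < k) (hω : 64 * (∏ i, l i) ^ 6 < 2 ^ ω)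
    (hD : D = 2 * k * ω) (hM : M = D * (24 * (24 * k))) (hMΦ : (p ^ (2 * M)).totient ∣ Φ)
    (hDΦ : 2 * D ≤ Φ) (hn : 24 * k * (4 * (Φ * (Φ * D) ^ Fintype.card ι)) + M ≤ n)
    (hH : 2 ^ n ≤ H) (hA : ζ ^ n * ∏ i, l i ^ u i ≤ H) (hB : ∏ i, l i ^ v i ≤ H)
    (hAB : ζ ^ n * ∏ i, l i ^ u i ≡ ∏ i, l i ^ v i [MOD p ^ m])
    (hne : ζ ^ n * ∏ i, l i ^ u i ≠ ∏ i, l i ^ v i) : (p ^ m) ^ k ≤ H := by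
  by_contra! hHm
  have hH₀ : H ≠ 0 := (Nat.two_pow_pos n |>.trans_le hH).ne'
  have hP : 0 < ∏ i, l i := prod_pos fun i _ ↦ pos_of_coprime_prime (hl i)
  have hPω : ∏ i, l i < 2 ^ ω :=
    ((Nat.le_self_pow (by lia) _).trans (Nat.le_mul_of_pos_left _ (by lia))).trans_lt hω
  have hω₀ : 0 < ω := Nat.pos_of_ne_zero fun h ↦ by simp [h, hP.ne'] at hPω
  have hD₀ : 0 < D := by rw [hD]; positivity
  have hM₀ : 0 < M := by rw [hM]; positivity
  set h := Nat.log 2 H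
  have hnh : n ≤ h := Nat.le_log_of_pow_le one_lt_two hH
  have hmH : p ^ m ≤ H := by
    by_contra! hlt
    exact hne (hAB.eq_of_lt_of_lt (hA.trans_lt hlt) (hB.trans_lt hlt))
  have hmh : m ≤ h := Nat.le_log_of_pow_le one_lt_two
    ((Nat.pow_le_pow_left hp.out.two_le m).trans hmH)
  have hDM : D ≤ M := (Nat.le_mul_of_pos_right D (by positivity)).trans hM.ge
  have hhX : h ≤ h / D * Φ := (le_two_mul_mul_div hD₀ (by lia)).trans
    (mul_comm (h / D) Φ ▸ Nat.mul_le_mul_right _ hDΦ)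
  have hXH : (2 ^ ω) ^ (2 * k * (h / D)) ≤ H := by
    rw [← pow_mul]
    refine (Nat.pow_le_pow_right two_pos ?_).trans (Nat.pow_log_le_self 2 hH₀)
    calc ω * (2 * k * (h / D)) = D * (h / D) := by rw [hD]; ring
      _ ≤ h := Nat.mul_div_le h D
  have hbound := pow_pow_le_mul_of_modEq (c := 24 * k) (N := h / M) (X := h / D) hζ hl
    (by lia) hD₀ (Nat.div_pos (by lia) hM₀) (by lia : 0 < Φ) hMΦ
    ((Nat.le_div_iff_mul_le (by lia)).2 (by lia)) (hnh.trans hhX)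
    (by rw [hM, ← Nat.div_div_eq_div_mul]; exact Nat.mul_div_le _ _)
    (hmh.trans (le_two_mul_mul_div hM₀ (by lia))) (hD ▸ pow_lt_pow_of_pow_lt_pow hPω hH hHm)
    hA hB hAB hne
  have hHω := lt_pow_of_lt_pow_of_pow_le (Nat.pos_of_ne_zero hH₀) hHm hbound
  exact (hHω.trans_le (Nat.pow_le_pow_left hω.le _)).not_ge hXH

theorem exists_forall_pow_pow_le_of_modEq (hl : ∀ i, p.Coprime (l i)) (k : ℕ) :
    ∃ n₀, ∀ n ≥ n₀, ∀ {ζ m H : ℕ} {u v : ι → ℕ}, p.Coprime ζ → 2 ^ n ≤ H →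
      ζ ^ n * ∏ i, l i ^ u i ≤ H → ∏ i, l i ^ v i ≤ H →
      ζ ^ n * ∏ i, l i ^ u i ≡ ∏ i, l i ^ v i [MOD p ^ m] →
      ζ ^ n * ∏ i, l i ^ u i ≠ ∏ i, l i ^ v i → (p ^ m) ^ k ≤ H := by
  obtain rfl | hk := k.eq_zero_or_pos
  · exact ⟨0, fun n _ ζ m H u v _ hH _ _ _ _ ↦ Nat.one_le_two_pow.trans (by simpa using hH)⟩
  set D := 2 * k * (64 * (∏ i, l i) ^ 6) with hD
  set M := D * (24 * (24 * k)) with hM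
  have hDM : D ≤ M := Nat.le_mul_of_pos_right D (by positivity)
  have hφ : 0 < (p ^ (2 * M)).totient := Nat.totient_pos.2 (pow_pos hp.out.pos _)
  exact ⟨_, fun n hn ζ m H u v hζ hH hA hB hAB hne ↦
    pow_pow_le_of_modEq hζ hl hk Nat.lt_two_pow_self hD hM (dvd_mul_left _ (2 * M))
      ((Nat.mul_le_mul_left 2 hDM).trans (Nat.le_mul_of_pos_right _ hφ)) hn hH hA hB hAB hne⟩

end CongruenceBound

/-! ### Sums of `S`-units -/

theorem ordCompl_pow (a n p : ℕ) : ordCompl[p] (a ^ n) = (ordCompl[p] a) ^ n := by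
  rw [Nat.factorization_pow, Finsupp.smul_apply, smul_eq_mul, pow_mul',
    Nat.div_pow (Nat.ordProj_dvd a p)]

theorem exists_eq_pow_factorization_mul {p : ℕ} (hp : p.Prime) {x : ℤ} (hx : x ≠ 0) :
    ∃ x' : ℤ, x = p ^ x.natAbs.factorization p * x' ∧ ¬(p : ℤ) ∣ x' ∧
      ordCompl[p] x.natAbs = x'.natAbs := by
  obtain ⟨x', hx'⟩ : (p ^ x.natAbs.factorization p : ℤ) ∣ x :=
    mod_cast Int.natCast_dvd.2 (Nat.ordProj_dvd x.natAbs p)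
  have hord : ordCompl[p] x.natAbs = x'.natAbs := by
    refine Nat.div_eq_of_eq_mul_right (Nat.ordProj_pos x.natAbs p) ?_
    conv_lhs => rw [hx']
    rw [Int.natAbs_mul, Int.natAbs_pow, Int.natAbs_natCast]
  refine ⟨x', hx', fun hdvd ↦ ?_, hord⟩
  exact Nat.not_dvd_ordCompl hp (Int.natAbs_ne_zero.2 hx) (hord ▸ Int.natCast_dvd.1 hdvd)

theorem ordCompl_natAbs_pow_mul {p : ℕ} (hp : p.Prime) (e : ℕ) {x : ℤ} (hx : ¬(p : ℤ) ∣ x) :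
    ordCompl[p] (p ^ e * x : ℤ).natAbs = x.natAbs := by
  rw [Int.natAbs_mul, Int.natAbs_pow, Int.natAbs_natCast]
  exact Nat.ordCompl_pow_mul_of_not_dvd e hp fun h ↦ hx (Int.natCast_dvd.2 h)

theorem sq_ordCompl_natAbs_add_modEq {p : ℕ} (hp : p.Prime) {x y : ℤ} (hx : x ≠ 0) (hy : y ≠ 0)
    (hxy : x.natAbs.factorization p < y.natAbs.factorization p) (hxy' : 2 * x + y ≠ 0) :
    (ordCompl[p] (x + y).natAbs) ^ 2 ≡ (ordCompl[p] x.natAbs) ^ 2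
        [MOD p ^ (y.natAbs.factorization p - x.natAbs.factorization p)] ∧
      (ordCompl[p] (x + y).natAbs) ^ 2 ≠ (ordCompl[p] x.natAbs) ^ 2 := by
  obtain ⟨x', hx', hpx', hord⟩ := exists_eq_pow_factorization_mul hp hx
  set e := x.natAbs.factorization p
  obtain ⟨m, hm⟩ := Nat.exists_eq_add_of_lt hxy
  obtain ⟨y', hy', -⟩ := exists_eq_pow_factorization_mul hp hy
  rw [hm, add_assoc, pow_add, mul_assoc] at hy'
  rw [hm, add_assoc, Nat.add_sub_cancel_left, hord]
  set y'' := (p : ℤ) ^ (m + 1) * y'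
  have hpy : (p : ℤ) ∣ y'' := dvd_mul_of_dvd_left (dvd_pow_self _ m.succ_ne_zero) _
  have hsum : x + y = p ^ e * (x' + y'') := by rw [mul_add, ← hx', ← hy']
  rw [hsum, ordCompl_natAbs_pow_mul hp e ((dvd_add_left hpy).not.2 hpx')]
  have hfactor : (x' + y'') ^ 2 - x' ^ 2 = y'' * (2 * x' + y'') := by ring
  constructor
  · rw [← Int.natCast_modEq_iff]
    push_cast
    rw [sq_abs, sq_abs]
    refine (Int.modEq_iff_dvd.2 ?_).symm
    rw [hfactor, mul_assoc]
    exact dvd_mul_right _ _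
  · intro heq
    zify at heq
    rw [sq_abs, sq_abs, ← sub_eq_zero, hfactor, mul_eq_zero] at heq
    rcases heq with hzero | hzero
    · exact hy (by rw [hy', hzero, mul_zero])
    · exact hxy' (by linear_combination 2 * hx' + hy' + (p : ℤ) ^ e * hzero)

theorem IsSUnit.prod_pow_factorization {S : Finset ℕ} {x : ℤ} (hx : IsSUnit S x) :
    ∏ l ∈ S, l ^ x.natAbs.factorization l = x.natAbs := by
  have hsupp : x.natAbs.factorization.support ⊆ S := fun l hl ↦
    hx.2 l (Nat.prime_of_mem_primeFactors hl) (Int.natCast_dvd.2 (Nat.dvd_of_mem_primeFactors hl))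
  rw [← Finsupp.prod_of_support_subset _ hsupp _ fun _ _ ↦ pow_zero _]
  exact Nat.prod_factorization_pow_eq_self (Int.natAbs_ne_zero.2 hx.1)

theorem IsSUnit.prod_erase_pow_factorization {S : Finset ℕ} {x : ℤ} (hx : IsSUnit S x) {p : ℕ}
    (hp : p ∈ S) (hp₀ : 0 < p) :
    ∏ l : S.erase p, (l : ℕ) ^ x.natAbs.factorization l = ordCompl[p] x.natAbs := by
  rw [Finset.prod_coe_sort (S.erase p) fun l ↦ l ^ x.natAbs.factorization l]
  refine (Nat.div_eq_of_eq_mul_right (pow_pos hp₀ _) ?_).symm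
  rw [mul_prod_erase S (fun l ↦ l ^ x.natAbs.factorization l) hp, hx.prod_pow_factorization]

theorem IsSUnit.exists_natAbs_le_pow_card {S : Finset ℕ} (hS : S.Nonempty) {x : ℤ}
    (hx : IsSUnit S x) : ∃ p ∈ S, x.natAbs ≤ (p ^ x.natAbs.factorization p) ^ #S := by
  obtain ⟨p, hp, hmax⟩ := S.exists_max_image (fun l ↦ l ^ x.natAbs.factorization l) hS
  exact ⟨p, hp, hx.prod_pow_factorization.ge.trans (prod_le_pow_card _ _ _ hmax)⟩

theorem pow_factorization_le_mul {p : ℕ} {x y : ℤ} (hx : x ≠ 0) :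
    p ^ y.natAbs.factorization p ≤
      Int.gcd x y * p ^ (y.natAbs.factorization p - x.natAbs.factorization p) := by
  have hdvd : p ^ min (x.natAbs.factorization p) (y.natAbs.factorization p) ∣ Int.gcd x y :=
    Nat.dvd_gcd ((pow_dvd_pow p (min_le_left _ _)).trans (Nat.ordProj_dvd _ p))
      ((pow_dvd_pow p (min_le_right _ _)).trans (Nat.ordProj_dvd _ p))
  calc p ^ y.natAbs.factorization p
      = p ^ min (x.natAbs.factorization p) (y.natAbs.factorization p) *
          p ^ (y.natAbs.factorization p - x.natAbs.factorization p) := by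
        rw [← pow_add]
        congr 1
        lia
    _ ≤ Int.gcd x y * p ^ (y.natAbs.factorization p - x.natAbs.factorization p) :=
        Nat.mul_le_mul_right _ (Nat.le_of_dvd (Int.gcd_pos_of_ne_zero_left y hx) hdvd)

theorem two_pow_le_two_mul_natAbs {x y w z : ℤ} {n : ℕ} (hw : w ≠ 0) (hz : 1 < |z|)
    (hxy : x.natAbs ≤ y.natAbs) (heq : x + y = w * z ^ n) : 2 ^ n ≤ 2 * y.natAbs := by
  have hz' : 2 ≤ z.natAbs := by
    rw [Int.abs_eq_natAbs] at hz
    exact_mod_cast hz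
  calc 2 ^ n ≤ z.natAbs ^ n := Nat.pow_le_pow_left hz' n
    _ ≤ w.natAbs * z.natAbs ^ n := Nat.le_mul_of_pos_left _ (Int.natAbs_pos.2 hw)
    _ = (x + y).natAbs := by rw [heq, Int.natAbs_mul, Int.natAbs_pow]
    _ ≤ 2 * y.natAbs := by lia

theorem exists_forall_pow_factorization_sub_le {S : Finset ℕ} (hS : ∀ p ∈ S, p.Prime) {p : ℕ}
    (hp : p ∈ S) (k : ℕ) :
    ∃ n₀, ∀ n ≥ n₀, ∀ {x y w z : ℤ}, IsSUnit S x → IsSUnit S y → IsSUnit S w → 1 < |z| →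
      x + y = w * z ^ n → x.natAbs ≤ y.natAbs → 2 * x + y ≠ 0 →
      (p ^ (y.natAbs.factorization p - x.natAbs.factorization p)) ^ k ≤ 4 * y.natAbs ^ 2 := by
  have : Fact p.Prime := ⟨hS p hp⟩
  have hpp := hS p hp
  have hcop (l : S.erase p) : p.Coprime l :=
    (Nat.coprime_primes hpp (hS l (mem_of_mem_erase l.2))).2 (ne_of_mem_erase l.2).symm
  obtain ⟨n₀, hn₀⟩ := exists_forall_pow_pow_le_of_modEq hcop k
  refine ⟨n₀, fun n hn x y w z hx hy hw hz heq hxy hne ↦ ?_⟩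
  have hy₀ : 0 < y.natAbs := Int.natAbs_pos.2 hy.1
  obtain hle | hlt := le_or_gt (y.natAbs.factorization p) (x.natAbs.factorization p)
  · rw [Nat.sub_eq_zero_of_le hle, pow_zero, one_pow]
    nlinarith
  have hA : (ordCompl[p] z.natAbs ^ 2) ^ n *
      ∏ l : S.erase p, (l : ℕ) ^ (w.natAbs.factorization l * 2) =
        (ordCompl[p] (x + y).natAbs) ^ 2 := by
    simp only [pow_mul, prod_pow]
    rw [hw.prod_erase_pow_factorization hp hpp.pos, heq, Int.natAbs_mul, Int.natAbs_pow,
      Nat.ordCompl_mul, ordCompl_pow]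
    ring
  have hB : ∏ l : S.erase p, (l : ℕ) ^ (x.natAbs.factorization l * 2) =
      (ordCompl[p] x.natAbs) ^ 2 := by
    simp only [pow_mul, prod_pow]
    rw [hx.prod_erase_pow_factorization hp hpp.pos]
  have hsq {b : ℕ} (hb : b ≤ 2 * y.natAbs) : (ordCompl[p] b) ^ 2 ≤ 4 * y.natAbs ^ 2 :=
    (Nat.pow_le_pow_left ((Nat.ordCompl_le b p).trans hb) 2).trans_eq (by ring)
  have hn_le := two_pow_le_two_mul_natAbs hw.1 hz hxy heq
  have hζ : p.Coprime (ordCompl[p] z.natAbs ^ 2) :=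
    (Nat.coprime_ordCompl hpp (Int.natAbs_ne_zero.2 (abs_pos.1 (by lia)))).pow_right 2
  obtain ⟨hmod, hne⟩ := sq_ordCompl_natAbs_add_modEq hpp hx.1 hy.1 hlt hne
  rw [← hA, ← hB] at hmod hne
  exact hn₀ n hn hζ (by nlinarith) (hA.trans_le (hsq (by lia)))
    (hB.trans_le (hsq (by lia))) hmod hne

theorem exists_forall_natAbs_le {S : Finset ℕ} (hS : ∀ p ∈ S, p.Prime) (a : ℕ) :
    ∃ n₀, ∀ n ≥ n₀, ∀ {x y w z : ℤ}, IsSUnit S x → IsSUnit S y → IsSUnit S w → Int.gcd x y ≤ a →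
      1 < |z| → x + y = w * z ^ n → x.natAbs ≤ y.natAbs → y.natAbs ≤ 2 * a ^ (2 * #S) := by
  choose! N hN using fun p hp ↦ exists_forall_pow_factorization_sub_le hS (p := p) hp (4 * #S)
  refine ⟨S.sup N, fun n hn x y w z hx hy hw hgcd hz heq hxy ↦ ?_⟩
  obtain rfl | hS₀ := S.eq_empty_or_nonempty
  · have hy₁ : 1 = y.natAbs := by simpa only [prod_empty] using hy.prod_pow_factorization
    rw [← hy₁, card_empty, mul_zero, pow_zero]
    exact one_le_two
  by_cases hne : 2 * x + y = 0
  · have hxa : x.natAbs ≤ a := by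
      refine le_trans (le_of_eq ?_) hgcd
      rw [show y = x * (-2) by lia, Int.gcd_mul_right_right]
    have ha : a ≤ a ^ (2 * #S) := Nat.le_self_pow (by have := hS₀.card_pos; lia) a
    lia
  obtain ⟨p, hp, hle⟩ := hy.exists_natAbs_le_pow_card hS₀
  set q := p ^ (y.natAbs.factorization p - x.natAbs.factorization p)
  have hq : q ^ (4 * #S) ≤ 4 * y.natAbs ^ 2 :=
    hN p hp n ((Finset.le_sup hp).trans hn) hx hy hw hz heq hxy hne
  have hy_le : y.natAbs ≤ (a * q) ^ #S := hle.trans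
    (Nat.pow_le_pow_left ((pow_factorization_le_mul hx.1).trans (Nat.mul_le_mul_right _ hgcd)) _)
  refine (Nat.pow_le_pow_iff_left two_ne_zero).1 ?_
  refine le_of_mul_le_mul_right ?_ (pow_pos (Int.natAbs_pos.2 hy.1) 2)
  calc y.natAbs ^ 2 * y.natAbs ^ 2 = y.natAbs ^ 4 := by ring
    _ ≤ ((a * q) ^ #S) ^ 4 := Nat.pow_le_pow_left hy_le 4
    _ = a ^ (4 * #S) * q ^ (4 * #S) := by ring
    _ ≤ a ^ (4 * #S) * (4 * y.natAbs ^ 2) := Nat.mul_le_mul_left _ hq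
    _ = (2 * a ^ (2 * #S)) ^ 2 * y.natAbs ^ 2 := by ring

theorem bounded_exponent_sums_of_S_units
    (S : Finset ℕ) (hS : ∀ p ∈ S, p.Prime) (a : ℕ) (ha : 0 < a) :
    ∃ C : ℕ, ∀ (x y w : ℤ) (n : ℕ) (z : ℤ),
      IsSUnit S x → IsSUnit S y → IsSUnit S w → Int.gcd x y ≤ a →
      2 ≤ n → 1 < |z| → x + y = w * z ^ n → n ≤ C := by
  obtain ⟨n₀, hn₀⟩ := exists_forall_natAbs_le hS a
  refine ⟨max n₀ (4 * a ^ (2 * #S)), fun x y w n z hx hy hw hgcd _ hz heq ↦ ?_⟩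
  wlog hxy : x.natAbs ≤ y.natAbs generalizing x y
  · exact this y x hy hx (Int.gcd_comm x y ▸ hgcd) (add_comm x y ▸ heq) (le_of_not_ge hxy)
  rcases le_total n n₀ with hn | hn
  · exact le_max_of_le_left hn
  have hy_le := hn₀ n hn hx hy hw hgcd hz heq hxy
  have htwo := two_pow_le_two_mul_natAbs hw.1 hz hxy heq
  have := n.lt_two_pow_self
  exact le_max_of_le_right (by lia)
end
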